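/- arXiv:1609.07601 — 7 statements merged into one kernel-verified Lean document; each statement's English description precedes it below -/
import Mathlib

section
/- Let d ≥ 2 and let F satisfy the standing assumptions and the normalization (A3), and suppose ∫₁^∞ t F''(t) dt = C₀ is finite. Then for every c ∈ (0,1) and every r ∈ [1,2] one has ∫₁^r (F')^{-1}(c/s^{d−1}) ds ≤ (2^d/(c(d−1))) · ∫_{c/r^{d−1}}^{c} (F')^{-1}(z) dz ≤ (2^d/(d−1))·(1 + C₀/F'(1)). -/
open Set Filter Topology MeasureTheory

/-!
Both inequalities are changes of variables. In the first, `z = φ s` with `φ s = c / s ^ p` has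
Jacobian `-φ' s = c * p / s ^ (p + 1) ≥ c * p / R ^ (p + 1)` on `[1, R]`, and the integrand is
nonnegative. In the second, `z = f t` turns the integral of the inverse function `g` over `[a, c]`
into that of `t * f' t` over `[g a, g c]`. Where `t ≤ 1` the integrand is at most `f' t`, whose
integral is at most `c`; and if `g c > 1`, then `1 ≤ c / f 1`, so the rest is at most `c / f 1`
times the tail integral over `(1, ∞)`.
-/

section DecreasingSubstitution

variable {φ φ' g : ℝ → ℝ} {a b K : ℝ}

lemma intervalIntegral_comp_le_mul_of_one_le_mul_neg_deriv (hab : a ≤ b)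
    (hφ : ContinuousOn φ (Icc a b)) (hφ' : ∀ s ∈ Ioo a b, HasDerivAt φ (φ' s) s) (hK0 : 0 ≤ K)
    (hK : ∀ s ∈ Ioo a b, 1 ≤ K * -φ' s) (hg : IntervalIntegrable g volume (φ b) (φ a))
    (hg0 : ∀ s ∈ Ioo a b, 0 ≤ g (φ s)) :
    ∫ s in a..b, g (φ s) ≤ K * ∫ z in φ b..φ a, g z := by
  have hφ'neg : ∀ s ∈ Ioo a b, φ' s ≤ 0 := fun s hs =>
    neg_nonneg.1 (pos_of_mul_pos_right (one_pos.trans_le (hK s hs)) hK0).le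
  have hIoo : Ioo (min a b) (max a b) = Ioo a b := by rw [min_eq_left hab, max_eq_right hab]
  rw [← uIcc_of_le hab] at hφ
  rw [← hIoo] at hφ' hφ'neg
  have hsubst : ∫ s in a..b, g (φ s) * φ' s = ∫ z in φ a..φ b, g z :=
    intervalIntegral.integral_comp_mul_deriv_of_deriv_nonpos hφ hφ' hφ'neg
  have hint : IntegrableOn (fun s => g (φ s) * φ' s) (Ioo a b) :=
    (intervalIntegrable_iff_integrableOn_Ioo_of_le hab).1
      ((intervalIntegral.integrable_comp_mul_deriv_iff_of_deriv_nonpos hφ hφ' hφ'neg).2 hg.symm)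
  rw [intervalIntegral.integral_symm (φ a), ← hsubst, intervalIntegral.integral_of_le hab,
    intervalIntegral.integral_of_le hab, integral_Ioc_eq_integral_Ioo,
    integral_Ioc_eq_integral_Ioo, mul_neg, ← neg_mul, ← integral_const_mul]
  refine integral_mono_of_nonneg (ae_restrict_of_forall_mem measurableSet_Ioo hg0)
    (hint.const_mul _) (ae_restrict_of_forall_mem measurableSet_Ioo fun s hs => ?_)
  calc g (φ s) ≤ g (φ s) * (K * -φ' s) := le_mul_of_one_le_right (hg0 s hs) (hK s hs)
    _ = -K * (g (φ s) * φ' s) := by ring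

lemma intervalIntegral_comp_div_rpow_le {c p r R : ℝ} (hc : 0 < c) (hp : 0 < p)
    (hr : r ∈ Icc 1 R) (hg : IntervalIntegrable g volume (c / r ^ p) c)
    (hg0 : ∀ z ∈ Icc (c / r ^ p) c, 0 ≤ g z) :
    ∫ s in (1 : ℝ)..r, g (c / s ^ p)
      ≤ R ^ (p + 1) / (c * p) * ∫ z in (c / r ^ p)..c, g z := by
  have hR0 : 0 < R := by linarith [hr.1, hr.2]
  have hderiv : ∀ s : ℝ, 0 < s → HasDerivAt (fun s => c / s ^ p) (-(c * p / s ^ (p + 1))) s := by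
    intro s hs
    refine ((hasDerivAt_const s c).fun_div (Real.hasDerivAt_rpow_const (.inl hs.ne'))
      (Real.rpow_pos_of_pos hs p).ne').congr_deriv ?_
    rw [Real.rpow_sub_one hs.ne', Real.rpow_add_one hs.ne']
    field_simp
    ring
  have hjacobian : ∀ s ∈ Ioo 1 r,
      1 ≤ R ^ (p + 1) / (c * p) * -(-(c * p / s ^ (p + 1))) := by
    intro s hs
    have hs0 : 0 < s := one_pos.trans hs.1
    rw [neg_neg, div_mul_div_cancel₀ (by positivity), one_le_div (by positivity)]
    exact Real.rpow_le_rpow hs0.le (hs.2.le.trans hr.2) (by positivity)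
  have hrange : ∀ s ∈ Ioo 1 r, c / s ^ p ∈ Icc (c / r ^ p) c := by
    intro s hs
    have hs0 : 0 < s := one_pos.trans hs.1
    refine ⟨?_, div_le_self hc.le (Real.one_le_rpow hs.1.le hp.le)⟩
    have hsr := hs.2.le
    gcongr
  simpa only [Real.one_rpow, div_one] using
    intervalIntegral_comp_le_mul_of_one_le_mul_neg_deriv hr.1
      (fun s hs => (hderiv s (one_pos.trans_le hs.1)).continuousAt.continuousWithinAt)
      (fun s hs => hderiv s (one_pos.trans hs.1)) (by positivity) hjacobian
      (by simpa only [Real.one_rpow, div_one] using hg) (fun s hs => hg0 _ (hrange s hs))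

end DecreasingSubstitution

lemma intervalIntegral_eq_of_leftInvOn {f f' g : ℝ → ℝ} {α γ : ℝ}
    (hf : ContinuousOn f (uIcc α γ))
    (hf' : ∀ t ∈ Ioo (min α γ) (max α γ), HasDerivAt f (f' t) t)
    (hf'0 : ∀ t ∈ Ioo (min α γ) (max α γ), 0 ≤ f' t) (hgf : LeftInvOn g f (uIcc α γ)) :
    ∫ z in f α..f γ, g z = ∫ t in α..γ, t * f' t := by
  rw [← intervalIntegral.integral_comp_mul_deriv_of_deriv_nonneg hf hf' hf'0]
  refine intervalIntegral.integral_congr fun t ht => ?_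
  simp only [Function.comp_apply, hgf ht]

lemma setIntegral_id_mul_le {h : ℝ → ℝ} {s : Set ℝ} {β K : ℝ} {μ : Measure ℝ}
    (hs : MeasurableSet s) (hs0 : s ⊆ Ioi 0) (hβ : 0 ≤ β) (hh : ∀ t ∈ Ioi 0, 0 ≤ h t)
    (hK0 : 0 ≤ K) (hK : ∀ t ∈ s, β < t → 1 ≤ K) (hint : IntegrableOn h s μ)
    (htail : IntegrableOn (fun t => t * h t) (Ioi β) μ) :
    ∫ t in s, t * h t ∂μ ≤ β * (∫ t in s, h t ∂μ) + K * ∫ t in Ioi β, t * h t ∂μ := by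
  have hnonneg : ∀ t ∈ Ioi (0 : ℝ), 0 ≤ t * h t := fun t ht => mul_nonneg (le_of_lt ht) (hh t ht)
  set tail : ℝ → ℝ := (Ioi β).indicator fun t => t * h t
  have htail0 : 0 ≤ tail := indicator_nonneg fun t ht => hnonneg t (hβ.trans_lt ht)
  have htailint : Integrable tail μ := (integrable_indicator_iff measurableSet_Ioi).2 htail
  have hsplit : ∀ t ∈ s, t * h t ≤ β * h t + K * tail t := by
    intro t ht
    rcases le_or_gt t β with htβ | hβt
    · exact (mul_le_mul_of_nonneg_right htβ (hh t (hs0 ht))).trans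
        (le_add_of_nonneg_right (mul_nonneg hK0 (htail0 t)))
    · have htail_eq : tail t = t * h t := indicator_of_mem hβt _
      rw [htail_eq]
      exact (le_mul_of_one_le_left (hnonneg t (hs0 ht)) (hK t ht hβt)).trans
        (le_add_of_nonneg_left (mul_nonneg hβ (hh t (hs0 ht))))
  calc ∫ t in s, t * h t ∂μ ≤ ∫ t in s, (β * h t + K * tail t) ∂μ :=
        integral_mono_of_nonneg (ae_restrict_of_forall_mem hs fun t ht => hnonneg t (hs0 ht))
          ((hint.const_mul β).add (htailint.integrableOn.const_mul K))
          (ae_restrict_of_forall_mem hs hsplit)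
    _ = β * (∫ t in s, h t ∂μ) + K * ∫ t in s, tail t ∂μ := by
        rw [integral_add (hint.const_mul β) (htailint.integrableOn.const_mul K),
          integral_const_mul, integral_const_mul]
    _ ≤ β * (∫ t in s, h t ∂μ) + K * ∫ t in Ioi β, t * h t ∂μ := by
        rw [← integral_indicator measurableSet_Ioi]
        exact add_le_add_right
          (mul_le_mul_of_nonneg_left (setIntegral_le_integral htailint (.of_forall htail0)) hK0) _

section PositiveDerivative

variable {f f' : ℝ → ℝ} (hf' : ∀ t ∈ Ioi (0 : ℝ), HasDerivAt f (f' t) t)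
  (hf'pos : ∀ t ∈ Ioi (0 : ℝ), 0 < f' t)

include hf' hf'pos

lemma strictMonoOn_Ioi_of_hasDerivAt_pos : StrictMonoOn f (Ioi 0) :=
  strictMonoOn_of_hasDerivWithinAt_pos (convex_Ioi 0)
    (fun t ht => (hf' t ht).continuousAt.continuousWithinAt)
    (fun t ht => (hf' t (interior_subset ht)).hasDerivWithinAt)
    (fun t ht => hf'pos t (interior_subset ht))

lemma lt_of_tendsto_nhdsGT_of_hasDerivAt_pos {l s : ℝ} (hl : Tendsto f (𝓝[>] 0) (𝓝 l))
    (hs : 0 < s) : l < f s := by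
  have hmono := strictMonoOn_Ioi_of_hasDerivAt_pos hf' hf'pos
  have hle : l ≤ f (s / 2) := by
    refine le_of_tendsto hl ?_
    filter_upwards [Ioo_mem_nhdsGT (half_pos hs)] with t ht
    exact (hmono ht.1 (half_pos hs) ht.2).le
  exact hle.trans_lt (hmono (half_pos hs) hs (half_lt_self hs))

lemma intervalIntegral_id_mul_deriv_le {α β γ : ℝ} (hα : 0 < α) (hαγ : α ≤ γ) (hβ : 0 < β)
    (hfα : 0 ≤ f α) (hfβ : 0 < f β) (htail : IntegrableOn (fun t => t * f' t) (Ioi β)) :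
    ∫ t in α..γ, t * f' t ≤ f γ * (β + (∫ t in Ioi β, t * f' t) / f β) := by
  have hmono := (strictMonoOn_Ioi_of_hasDerivAt_pos hf' hf'pos).monotoneOn
  have hfγ : 0 ≤ f γ := hfα.trans (hmono hα (hα.trans_le hαγ) hαγ)
  have hpos : uIcc α γ ⊆ Ioi 0 := fun t ht => (lt_min hα (hα.trans_le hαγ)).trans_le ht.1
  have hf'int : IntervalIntegrable f' volume α γ :=
    intervalIntegral.intervalIntegrable_deriv_of_nonneg
      (fun t ht => (hf' t (hpos ht)).continuousAt.continuousWithinAt)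
      (fun t ht => hf' t (hpos (Ioo_subset_Icc_self ht)))
      (fun t ht => (hf'pos t (hpos (Ioo_subset_Icc_self ht))).le)
  have hFTC : ∫ t in α..γ, f' t = f γ - f α :=
    intervalIntegral.integral_eq_sub_of_hasDerivAt (fun t ht => hf' t (hpos ht)) hf'int
  have hratio : ∀ t ∈ Ioc α γ, β < t → 1 ≤ f γ / f β := fun t ht hβt =>
    (one_le_div hfβ).2 (hmono hβ (hα.trans_le hαγ) (hβt.le.trans ht.2))
  rw [intervalIntegral.integral_of_le hαγ] at hFTC ⊢
  calc ∫ t in Ioc α γ, t * f' t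
      ≤ β * (∫ t in Ioc α γ, f' t) + f γ / f β * ∫ t in Ioi β, t * f' t :=
        setIntegral_id_mul_le measurableSet_Ioc (fun t ht => hα.trans ht.1) hβ.le
          (fun t ht => (hf'pos t ht).le) (div_nonneg hfγ hfβ.le) hratio hf'int.1 htail
    _ ≤ β * f γ + f γ / f β * ∫ t in Ioi β, t * f' t := by
        rw [hFTC]
        gcongr
        exact sub_le_self _ hfα
    _ = f γ * (β + (∫ t in Ioi β, t * f' t) / f β) := by ring

variable {g : ℝ → ℝ} {a c : ℝ}

lemma intervalIntegral_rightInverse_le {β : ℝ} (ha : 0 ≤ a) (hac : a ≤ c)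
    (hg : MapsTo g (Icc a c) (Ioi 0)) (hfg : LeftInvOn f g (Icc a c)) (hβ : 0 < β)
    (hfβ : 0 < f β) (htail : IntegrableOn (fun t => t * f' t) (Ioi β)) :
    ∫ z in a..c, g z ≤ c * (β + (∫ t in Ioi β, t * f' t) / f β) := by
  have hmono := strictMonoOn_Ioi_of_hasDerivAt_pos hf' hf'pos
  have hamem : a ∈ Icc a c := left_mem_Icc.2 hac
  have hcmem : c ∈ Icc a c := right_mem_Icc.2 hac
  have hgac : g a ≤ g c :=
    Function.monotoneOn_of_rightInvOn_of_mapsTo hmono.monotoneOn hfg hg hamem hcmem hac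
  have hpos : uIcc (g a) (g c) ⊆ Ioi 0 := fun t ht => (lt_min (hg hamem) (hg hcmem)).trans_le ht.1
  have hgf : LeftInvOn g f (uIcc (g a) (g c)) := by
    intro t ht
    have ht0 := hpos ht
    rw [uIcc_of_le hgac] at ht
    have hft : f t ∈ Icc a c := by
      rw [← hfg hamem, ← hfg hcmem]
      exact ⟨hmono.monotoneOn (hg hamem) ht0 ht.1, hmono.monotoneOn ht0 (hg hcmem) ht.2⟩
    exact hmono.injOn (hg hft) ht0 (hfg hft)
  have hsubst : ∫ z in a..c, g z = ∫ t in g a..g c, t * f' t := by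
    have := intervalIntegral_eq_of_leftInvOn
      (fun t ht => (hf' t (hpos ht)).continuousAt.continuousWithinAt)
      (fun t ht => hf' t (hpos (Ioo_subset_Icc_self ht)))
      (fun t ht => (hf'pos t (hpos (Ioo_subset_Icc_self ht))).le) hgf
    rwa [hfg hamem, hfg hcmem] at this
  have hbound := intervalIntegral_id_mul_deriv_le hf' hf'pos (hg hamem) hgac hβ
    (by rwa [hfg hamem]) hfβ htail
  rwa [← hsubst, hfg hcmem] at hbound

end PositiveDerivative

/-- Here `f`, `f'`, `g` are the paper's `F'`, `F''`, `(F')⁻¹`, and `p`, `R` are its `d - 1`, `2`. -/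
theorem stmt_2_general {f f' g : ℝ → ℝ} {p c r R L : ℝ}
    (hf' : ∀ t ∈ Ioi 0, HasDerivAt f (f' t) t) (hf'pos : ∀ t ∈ Ioi 0, 0 < f' t) (hf1 : 0 < f 1)
    (htail : IntegrableOn (fun t => t * f' t) (Ioi 1))
    (hg : MapsTo g (Ioo 0 L) (Ioi 0)) (hfg : LeftInvOn f g (Ioo 0 L))
    (hp : 0 < p) (hc : c ∈ Ioo 0 L) (hr : r ∈ Icc 1 R) :
    ∫ s in (1 : ℝ)..r, g (c / s ^ p) ≤ R ^ (p + 1) / (c * p) * ∫ z in (c / r ^ p)..c, g z ∧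
      R ^ (p + 1) / (c * p) * (∫ z in (c / r ^ p)..c, g z)
        ≤ R ^ (p + 1) / p * (1 + (∫ t in Ioi 1, t * f' t) / f 1) := by
  have hc0 : 0 < c := hc.1
  have hr0 : 0 < r := one_pos.trans_le hr.1
  have hR0 : 0 < R := hr0.trans_le hr.2
  have ha0 : 0 < c / r ^ p := by positivity
  have hac : c / r ^ p ≤ c := div_le_self hc0.le (Real.one_le_rpow hr.1 hp.le)
  have hsub : Icc (c / r ^ p) c ⊆ Ioo 0 L := fun z hz => ⟨ha0.trans_le hz.1, hz.2.trans_lt hc.2⟩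
  have hgmono : MonotoneOn g (Ioo 0 L) :=
    Function.monotoneOn_of_rightInvOn_of_mapsTo
      (strictMonoOn_Ioi_of_hasDerivAt_pos hf' hf'pos).monotoneOn hfg hg
  have hgint : IntervalIntegrable g volume (c / r ^ p) c :=
    (hgmono.mono (by rwa [uIcc_of_le hac])).intervalIntegrable
  refine ⟨intervalIntegral_comp_div_rpow_le hc0 hp hr hgint fun z hz => (hg (hsub hz)).le, ?_⟩
  calc R ^ (p + 1) / (c * p) * (∫ z in (c / r ^ p)..c, g z)
      ≤ R ^ (p + 1) / (c * p) * (c * (1 + (∫ t in Ioi 1, t * f' t) / f 1)) := by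
        gcongr
        exact intervalIntegral_rightInverse_le hf' hf'pos ha0.le hac (hg.mono_left hsub)
          (hfg.mono hsub) one_pos hf1 htail
    _ = R ^ (p + 1) / p * (1 + (∫ t in Ioi 1, t * f' t) / f 1) := by
        field_simp

/-- Under the standing assumptions, (A3), and `∫₁^∞ t F''(t) dt = C₀ < ∞`,
for every `c ∈ (0,1)` and `r ∈ [1,2]`:
`∫₁^r (F')⁻¹(c/s^{d−1}) ds ≤ (2^d/(c(d−1))) ∫_{c/r^{d−1}}^c (F')⁻¹(z) dz
  ≤ (2^d/(d−1)) (1 + C₀/F'(1))`. -/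
theorem stmt_2
    (d : ℕ) (hd : 2 ≤ d)
    (F F' F'' : ℝ → ℝ) (C₁ C₂ C₀ : ℝ)
    (hC₁ : 0 < C₁) (hC₂ : 0 < C₂)
    (hder1 : ∀ s ∈ Ioi (0:ℝ), HasDerivAt F (F' s) s)
    (hder2 : ∀ s ∈ Ioi (0:ℝ), HasDerivAt F' (F'' s) s)
    (hF''cont : ContinuousOn F'' (Ioi 0))
    (hF''pos : ∀ s ∈ Ioi (0:ℝ), 0 < F'' s)
    (hF'0 : Tendsto F' (nhdsWithin 0 (Ioi 0)) (nhds 0))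
    (hgrowth : ∀ s ∈ Ioi (0:ℝ), C₁ * s - C₂ ≤ F s ∧ F s ≤ C₂ * (1 + s))
    (hosc : ∀ s, 1 ≤ s → ∀ t ∈ Icc (s/2) (2*s), F'' s / F'' t ≤ C₂)
    (hF0 : Tendsto F (nhdsWithin 0 (Ioi 0)) (nhds 0))
    (hF'1 : Tendsto F' atTop (nhds 1))
    (hInt : IntegrableOn (fun t => t * F'' t) (Ioi 1))
    (hC₀ : (∫ t in Ioi (1:ℝ), t * F'' t) = C₀)
    (Finv : ℝ → ℝ)
    (hFinv : ∀ s ∈ Ioi (0:ℝ), Finv (F' s) = s)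
    (hFinv' : ∀ y ∈ Ioo (0:ℝ) 1, F' (Finv y) = y ∧ 0 < Finv y) :
    ∀ c ∈ Ioo (0:ℝ) 1, ∀ r ∈ Icc (1:ℝ) 2,
      (∫ s in (1:ℝ)..r, Finv (c / s ^ (d - 1)))
          ≤ 2 ^ d / (c * ((d:ℝ) - 1)) * ∫ z in (c / r ^ (d - 1))..c, Finv z ∧
        2 ^ d / (c * ((d:ℝ) - 1)) * (∫ z in (c / r ^ (d - 1))..c, Finv z)
          ≤ 2 ^ d / ((d:ℝ) - 1) * (1 + C₀ / F' 1) := by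
  intro c hc r hr
  obtain ⟨n, rfl⟩ : ∃ n, d = n + 1 := ⟨d - 1, by omega⟩
  have hn : (0 : ℝ) < n := by exact_mod_cast (by omega : 0 < n)
  subst hC₀
  simpa [Real.rpow_add_one, pow_succ] using stmt_2_general hder2 hF''pos
    (lt_of_tendsto_nhdsGT_of_hasDerivAt_pos hder2 hF''pos hF'0 one_pos) hInt
    (fun y hy => (hFinv' y hy).2) (fun y hy => (hFinv' y hy).1) hn hc hr
end

section
/- Let F : (0,∞) → ℝ be C² with F''(s) > 0 for all s > 0, suppose lim_{s→∞} F'(s) = 1 (so that F'' is integrable on (1,∞)), and assume the bounded oscillation condition: there is C₂ > 0 with F''(s)/F''(t) ≤ C₂ for all s ≥ 1 and t ∈ [s/2, 2s]. Then lim_{s→∞} s F''(s) = 0. -/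
open Set Filter Topology MeasureTheory

/-!
By the mean value theorem, `f (c * s) - f s = (c - 1) * s * f' t` for some `t` between `s` and
`c * s`. If `f' s` is controlled by `f' t` on that interval, then `s * f' s` is controlled by
`f (c * s) - f s`, which tends to zero as soon as `f` has a finite limit at infinity.
-/

theorem sub_mul_le_mul_abs_image_sub_of_hasDerivAt {f f' : ℝ → ℝ} {a b m C : ℝ} (hab : a < b)
    (hfc : ContinuousOn f (Icc a b)) (hf : ∀ t ∈ Ioo a b, HasDerivAt f (f' t) t)
    (hm : ∀ t ∈ Ioo a b, m ≤ C * |f' t|) :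
    (b - a) * m ≤ C * |f b - f a| := by
  have hlen : 0 < b - a := sub_pos.2 hab
  obtain ⟨t, ht, hslope⟩ := exists_hasDerivAt_eq_slope f f' hab hfc hf
  calc (b - a) * m ≤ (b - a) * (C * |f' t|) := by gcongr; exact hm t ht
    _ = C * |f b - f a| := by
      rw [hslope, abs_div, abs_of_pos hlen]
      field_simp

theorem isBigO_mul_hasDerivAt_image_const_mul_sub {f f' : ℝ → ℝ} {c C : ℝ} (hc : 1 < c)
    (hf : ∀ᶠ s in atTop, HasDerivAt f (f' s) s)
    (hosc : ∀ᶠ s in atTop, ∀ t ∈ Ioo s (c * s), |f' s| ≤ C * |f' t|) :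
    (fun s => s * f' s) =O[atTop] fun s => f (c * s) - f s := by
  refine Asymptotics.IsBigO.of_bound (C / (c - 1)) ?_
  filter_upwards [eventually_forall_ge_atTop.2 hf, hosc, eventually_gt_atTop 0]
    with s hderiv hs hpos
  have hmvt : (c * s - s) * |f' s| ≤ C * |f (c * s) - f s| :=
    sub_mul_le_mul_abs_image_sub_of_hasDerivAt (lt_mul_of_one_lt_left hpos hc)
      (fun t ht => (hderiv t ht.1).continuousAt.continuousWithinAt)
      (fun t ht => hderiv t ht.1.le) hs
  rw [Real.norm_eq_abs, Real.norm_eq_abs, abs_mul, abs_of_pos hpos, div_mul_eq_mul_div,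
    le_div_iff₀ (sub_pos.2 hc)]
  linarith

theorem stmt_5_general {f f' : ℝ → ℝ} {c C L : ℝ} (hc : 1 < c)
    (hf : ∀ᶠ s in atTop, HasDerivAt f (f' s) s) (hlim : Tendsto f atTop (𝓝 L))
    (hosc : ∀ᶠ s in atTop, ∀ t ∈ Ioo s (c * s), |f' s| ≤ C * |f' t|) :
    Tendsto (fun s => s * f' s) atTop (𝓝 0) := by
  have hscale : Tendsto (fun s => f (c * s)) atTop (𝓝 L) :=
    hlim.comp (tendsto_id.const_mul_atTop (zero_lt_one.trans hc))
  have hdiff : Tendsto (fun s => f (c * s) - f s) atTop (𝓝 0) := by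
    simpa only [sub_self] using hscale.sub hlim
  exact (isBigO_mul_hasDerivAt_image_const_mul_sub hc hf hosc).trans_tendsto hdiff

/-- If `F` is `C²` on `(0,∞)` with `F'' > 0`, `F'(s) → 1` as `s → ∞`,
and the bounded oscillation condition holds, then `s F''(s) → 0` as `s → ∞`. -/
theorem stmt_5
    (F F' F'' : ℝ → ℝ) (C₂ : ℝ) (hC₂ : 0 < C₂)
    (hder1 : ∀ s ∈ Ioi (0:ℝ), HasDerivAt F (F' s) s)
    (hder2 : ∀ s ∈ Ioi (0:ℝ), HasDerivAt F' (F'' s) s)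
    (hF''cont : ContinuousOn F'' (Ioi 0))
    (hF''pos : ∀ s ∈ Ioi (0:ℝ), 0 < F'' s)
    (hF'1 : Tendsto F' atTop (nhds 1))
    (hosc : ∀ s, 1 ≤ s → ∀ t ∈ Icc (s/2) (2*s), F'' s / F'' t ≤ C₂) :
    Tendsto (fun s => s * F'' s) atTop (nhds 0) := by
  refine stmt_5_general one_lt_two ((eventually_gt_atTop 0).mono hder2) hF'1 (C := C₂) ?_
  filter_upwards [eventually_ge_atTop 1] with s hs t ht
  have hs0 : 0 < s := zero_lt_one.trans_le hs
  have ht0 : 0 < F'' t := hF''pos t (hs0.trans ht.1)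
  rw [abs_of_pos (hF''pos s hs0), abs_of_pos ht0, ← div_le_iff₀ ht0]
  exact hosc s hs t ⟨(half_lt_self hs0).le.trans ht.1.le, ht.2.le⟩
end

section
/- Let F satisfy the standing assumptions and the normalization (A3), and set a(s) := F'(s)/s for s > 0. Then lim_{s→∞} s² a'(s) = −1. -/
open Set Filter Topology MeasureTheory

/-!
Since `s² (f s / s)' = s f'(s) - f s`, it suffices to show that `s f'(s) → 0` whenever `f`
converges at infinity. If `|f'(s)| ≤ C f'(t)` for all `t` in the window `(s, c s)`, then the mean
value theorem bounds `s |f'(s)|` by a constant multiple of the increment `f (c s) - f s`, which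
tends to `0`.
-/

theorem sq_mul_deriv_of_eventuallyEq_div_id {𝕜 : Type*} [NontriviallyNormedField 𝕜]
    {f a : 𝕜 → 𝕜} {f' s : 𝕜}
    (hf : HasDerivAt f f' s) (hs : s ≠ 0) (ha : a =ᶠ[𝓝 s] fun x => f x / x) :
    s ^ 2 * deriv a s = s * f' - f s := by
  rw [ha.deriv_eq, (hf.fun_div (hasDerivAt_id' s) hs).deriv, mul_div_cancel₀ _ (pow_ne_zero 2 hs)]
  ring

section Dilation

variable {f f' : ℝ → ℝ} {c C : ℝ}

theorem mul_le_mul_dilation_sub_of_le_mul_deriv {s m : ℝ} (hc : 1 < c) (hs : 0 < s)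
    (hder : ∀ t ∈ Icc s (c * s), HasDerivAt f (f' t) t)
    (hm : ∀ t ∈ Ioo s (c * s), m ≤ C * f' t) :
    s * m ≤ C / (c - 1) * (f (c * s) - f s) := by
  have hc_sub : 0 < c - 1 := sub_pos.2 hc
  obtain ⟨t, ht, hslope⟩ := exists_hasDerivAt_eq_slope f f' (lt_mul_of_one_lt_left hs hc)
    (fun t ht => (hder t ht).continuousAt.continuousWithinAt)
    (fun t ht => hder t (Ioo_subset_Icc_self ht))
  calc s * m ≤ s * (C * f' t) := mul_le_mul_of_nonneg_left (hm t ht) hs.le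
    _ = s * (C * ((f (c * s) - f s) / ((c - 1) * s))) := by rw [hslope, sub_one_mul]
    _ = C / (c - 1) * (f (c * s) - f s) := by field_simp

theorem tendsto_mul_deriv_zero_of_tendsto_dilation_sub (hc : 1 < c)
    (hder : ∀ᶠ s in atTop, HasDerivAt f (f' s) s)
    (hosc : ∀ᶠ s in atTop, ∀ t ∈ Ioo s (c * s), |f' s| ≤ C * f' t)
    (hincr : Tendsto (fun s => f (c * s) - f s) atTop (𝓝 0)) :
    Tendsto (fun s => s * f' s) atTop (𝓝 0) := by
  have hbound : Tendsto (fun s => C / (c - 1) * (f (c * s) - f s)) atTop (𝓝 0) := by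
    simpa only [mul_zero] using hincr.const_mul (C / (c - 1))
  refine squeeze_zero_norm' ?_ hbound
  filter_upwards [eventually_gt_atTop 0, eventually_forall_ge_atTop.2 hder, hosc]
    with s hs hder_ge hosc_s
  rw [norm_mul, Real.norm_of_nonneg hs.le, Real.norm_eq_abs]
  exact mul_le_mul_dilation_sub_of_le_mul_deriv hc hs (fun t ht => hder_ge t ht.1) hosc_s

theorem tendsto_mul_deriv_zero_of_tendsto {l : ℝ} (hc : 1 < c)
    (hder : ∀ᶠ s in atTop, HasDerivAt f (f' s) s)
    (hosc : ∀ᶠ s in atTop, ∀ t ∈ Ioo s (c * s), |f' s| ≤ C * f' t)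
    (hlim : Tendsto f atTop (𝓝 l)) :
    Tendsto (fun s => s * f' s) atTop (𝓝 0) := by
  have hdilate : Tendsto (fun s => f (c * s)) atTop (𝓝 l) :=
    hlim.comp (tendsto_id.const_mul_atTop (zero_lt_one.trans hc))
  refine tendsto_mul_deriv_zero_of_tendsto_dilation_sub hc hder hosc ?_
  simpa only [sub_self] using hdilate.sub hlim

theorem stmt_6_general {a : ℝ → ℝ} {l : ℝ} (hc : 1 < c)
    (hder : ∀ᶠ s in atTop, HasDerivAt f (f' s) s)
    (hosc : ∀ᶠ s in atTop, ∀ t ∈ Ioo s (c * s), |f' s| ≤ C * f' t)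
    (hlim : Tendsto f atTop (𝓝 l)) (ha : a =ᶠ[atTop] fun s => f s / s) :
    Tendsto (fun s => s ^ 2 * deriv a s) atTop (𝓝 (-l)) := by
  have hdiff : Tendsto (fun s => s * f' s - f s) atTop (𝓝 (-l)) := by
    simpa only [zero_sub] using (tendsto_mul_deriv_zero_of_tendsto hc hder hosc hlim).sub hlim
  obtain ⟨b, hb⟩ := eventually_atTop.1 ha
  refine hdiff.congr' ?_
  filter_upwards [hder, eventually_ne_atTop 0, eventually_gt_atTop b] with s hder_s hs hbs
  have ha_nhds : a =ᶠ[𝓝 s] fun x => f x / x := (eventually_ge_nhds hbs).mono hb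
  exact (sq_mul_deriv_of_eventuallyEq_div_id hder_s hs ha_nhds).symm

end Dilation

/-- Under the standing assumptions on `F` and the normalization (A3),
with `a(s) := F'(s)/s`, one has `s² a'(s) → −1` as `s → ∞`. -/
theorem stmt_6
    (F F' F'' : ℝ → ℝ) (C₁ C₂ : ℝ)
    (hC₁ : 0 < C₁) (hC₂ : 0 < C₂)
    (hder1 : ∀ s ∈ Ioi (0:ℝ), HasDerivAt F (F' s) s)
    (hder2 : ∀ s ∈ Ioi (0:ℝ), HasDerivAt F' (F'' s) s)
    (hF''cont : ContinuousOn F'' (Ioi 0))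
    (hF''pos : ∀ s ∈ Ioi (0:ℝ), 0 < F'' s)
    (hF'0 : Tendsto F' (nhdsWithin 0 (Ioi 0)) (nhds 0))
    (hgrowth : ∀ s ∈ Ioi (0:ℝ), C₁ * s - C₂ ≤ F s ∧ F s ≤ C₂ * (1 + s))
    (hosc : ∀ s, 1 ≤ s → ∀ t ∈ Icc (s/2) (2*s), F'' s / F'' t ≤ C₂)
    (hF0 : Tendsto F (nhdsWithin 0 (Ioi 0)) (nhds 0))
    (hF'1 : Tendsto F' atTop (nhds 1))
    (a : ℝ → ℝ) (ha : ∀ s ∈ Ioi (0:ℝ), a s = F' s / s) :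
    Tendsto (fun s => s ^ 2 * deriv a s) atTop (nhds (-1)) := by
  have hosc_abs : ∀ᶠ s in atTop, ∀ t ∈ Ioo s (2 * s), |F'' s| ≤ C₂ * F'' t := by
    filter_upwards [eventually_ge_atTop 1] with s hs t ht
    have hs0 : 0 < s := zero_lt_one.trans_le hs
    rw [abs_of_pos (hF''pos s hs0), ← div_le_iff₀ (hF''pos t (hs0.trans ht.1))]
    exact hosc s hs t ⟨(half_le_self hs0.le).trans ht.1.le, ht.2.le⟩
  exact stmt_6_general one_lt_two ((eventually_gt_atTop 0).mono hder2) hosc_abs hF'1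
    ((eventually_gt_atTop 0).mono ha)
end

section
/- Let F satisfy the standing assumptions, the normalization (A3), and condition (A2): ∫₁^∞ t F''(t) dt = ∞. Then there exists a continuous, strictly positive, decreasing function g : [0,∞) → (0,∞) with lim_{s→∞} g(s) = 0 such that ∫₀^∞ t F''(t) g(t) dt = ∞, and such that moreover the function F_g defined by F_g(s) := ∫₀^s (1 − ∫_r^∞ F''(t) g(t) dt) dr is strictly convex, satisfies F_g(0) = 0, lim_{s→0⁺} F_g'(s) = 0, lim_{s→∞} F_g'(s) = 1, satisfies linear growth bounds C₁' s − C₂' ≤ F_g(s) ≤ C₂'(1+s) for some constants C₁', C₂' > 0, satisfies the bounded oscillation condition F_g''(s)/F_g''(t) ≤ 4C₂² for all s ≥ 1 and t ∈ [s/2, 2s], and satisfies ∫₁^∞ t F_g''(t) dt = ∞. -/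
open Set Filter Topology MeasureTheory

/-!
Only the density `p = F''` matters: it is positive and integrable on `(0, ∞)`, while `t * p t` is
not integrable at infinity. Put `Φ s = ∫ t in 0..s, t * p t`, which tends to infinity. In the spirit
of Abel and Dini, the weight `w = 1 / √(1 + Φ)` tends to zero but keeps the integral divergent:
since `w` is decreasing, `∫ t in 0..s, t * p t * w t ≥ Φ s * w s ≥ √(1 + Φ s) - 1`.

The bounded oscillation of `p` lets `Φ` grow by at most the factor `1 + 4 * C` on doubling, so that
`w s / w t ≤ √(1 + 4 * C) ≤ 4 * C` for `t ≤ 2 * s`. Finally `g` is `w` normalized so that `p * g`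
is a probability density; `F_g` is then the integral of its distribution function.
-/

theorem integrableOn_Ioi_of_hasDerivAt_of_tendsto {P p : ℝ → ℝ} {a l m : ℝ}
    (hderiv : ∀ s ∈ Ioi a, HasDerivAt P (p s) s) (hp : ∀ s ∈ Ioi a, 0 ≤ p s)
    (ha : Tendsto P (𝓝[>] a) (𝓝 m)) (htop : Tendsto P atTop (𝓝 l)) :
    IntegrableOn p (Ioi a) := by
  have hupdate : ∀ s ∈ Ioi a, Function.update P a m =ᶠ[𝓝 s] P := fun s hs => by
    filter_upwards [Ioi_mem_nhds hs] with x hx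
    exact Function.update_of_ne (ne_of_gt hx) m P
  refine integrableOn_Ioi_deriv_of_nonneg (g := Function.update P a m) (l := l) ?_
    (fun s hs => (hderiv s hs).congr_of_eventuallyEq (hupdate s hs)) hp (htop.congr' ?_)
  · rwa [continuousWithinAt_update_same, Ici_sdiff_left]
  · filter_upwards [eventually_gt_atTop a] with s hs
    exact (hupdate s hs).self_of_nhds.symm

theorem locallyIntegrableOn_id_mul {p : ℝ → ℝ} {a : ℝ} (hp : IntegrableOn p (Ioi a)) :
    LocallyIntegrableOn (fun t => t * p t) (Ici a) :=
  (Iff.mpr integrableOn_Ici_iff_integrableOn_Ioi hp).locallyIntegrableOn.continuousOn_mul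
    continuousOn_id isClosed_Ici.isLocallyClosed

section LocallyIntegrable

variable {f : ℝ → ℝ} {a b c s : ℝ}

theorem intervalIntegrable_of_locallyIntegrableOn_Ici (hf : LocallyIntegrableOn f (Ici a))
    (hb : a ≤ b) (hc : a ≤ c) : IntervalIntegrable f volume b c :=
  (hf.integrableOn_compact_subset (fun _ hx => (le_min hb hc).trans hx.1)
    isCompact_uIcc).intervalIntegrable

theorem continuousOn_primitive_Ici (hf : LocallyIntegrableOn f (Ici a)) :
    ContinuousOn (fun s => ∫ t in a..s, f t) (Ici a) := by
  intro s hs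
  have has : a ≤ s + 1 := (mem_Ici.1 hs).trans (lt_add_one s).le
  have hcont := intervalIntegral.continuousOn_primitive_interval
    (hf.integrableOn_compact_subset (fun _ hx => (le_min le_rfl has).trans hx.1) isCompact_uIcc)
  rw [uIcc_of_le has] at hcont
  have hnhds : Icc a (s + 1) ∈ 𝓝[Ici a] s :=
    inter_mem_nhdsWithin (Ici a) (Iic_mem_nhds (lt_add_one s))
  exact (hcont s ⟨hs, (lt_add_one s).le⟩).mono_of_mem_nhdsWithin hnhds

theorem monotoneOn_primitive_of_nonneg (hf : LocallyIntegrableOn f (Ici a))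
    (hnonneg : ∀ t ∈ Ioi a, 0 ≤ f t) : MonotoneOn (fun s => ∫ t in a..s, f t) (Ici a) := by
  intro x hx y hy hxy
  refine intervalIntegral.integral_mono_interval le_rfl hx hxy ?_
    (intervalIntegrable_of_locallyIntegrableOn_Ici hf le_rfl hy)
  filter_upwards [ae_restrict_mem measurableSet_Ioc] with t ht
  exact hnonneg t ht.1

theorem primitive_nonneg (hnonneg : ∀ t ∈ Ioi a, 0 ≤ f t) (hs : a ≤ s) :
    0 ≤ ∫ t in a..s, f t := by
  rw [intervalIntegral.integral_of_le hs]
  exact setIntegral_nonneg measurableSet_Ioc fun t ht => hnonneg t ht.1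

theorem lintegral_ofReal_Ioi_eq_top_iff (hf : LocallyIntegrableOn f (Ici a))
    (hnonneg : ∀ t ∈ Ioi a, 0 ≤ f t) (hab : a ≤ b) :
    (∫⁻ t in Ioi b, ENNReal.ofReal (f t)) = ⊤ ↔ ¬ IntegrableOn f (Ioi a) := by
  have hsub : Ioi b ⊆ Ioi a := Ioi_subset_Ioi hab
  have hmeas : AEStronglyMeasurable f (volume.restrict (Ioi b)) :=
    hf.aestronglyMeasurable.mono_set (hsub.trans Ioi_subset_Ici_self)
  have hnonneg' : 0 ≤ᵐ[volume.restrict (Ioi b)] f := by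
    filter_upwards [ae_restrict_mem measurableSet_Ioi] with t ht
    exact hnonneg t (hsub ht)
  have hIoc : IntegrableOn f (Ioc a b) :=
    (intervalIntegrable_of_locallyIntegrableOn_Ici hf le_rfl hab).1
  rw [← Ioc_union_Ioi_eq_Ioi hab, integrableOn_union, and_iff_right hIoc, IntegrableOn,
    ← lintegral_ofReal_ne_top_iff_integrable hmeas hnonneg', not_ne_iff]

theorem tendsto_primitive_atTop_iff (hf : LocallyIntegrableOn f (Ici a))
    (hnonneg : ∀ t ∈ Ioi a, 0 ≤ f t) :
    Tendsto (fun s => ∫ t in a..s, f t) atTop atTop ↔ ¬ IntegrableOn f (Ioi a) := by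
  refine ⟨fun htop hint => not_tendsto_nhds_of_tendsto_atTop htop _
    (intervalIntegral_tendsto_integral_Ioi a hint tendsto_id), fun hnot => ?_⟩
  have hmono : Monotone fun s => ∫ t in a..max a s, f t := fun x y hxy =>
    monotoneOn_primitive_of_nonneg hf hnonneg (le_max_left a x) (le_max_left a y)
      (max_le_max le_rfl hxy)
  have hmax : (fun s => ∫ t in a..max a s, f t) =ᶠ[atTop] fun s => ∫ t in a..s, f t := by
    filter_upwards [eventually_ge_atTop a] with s hs
    rw [max_eq_right hs]
  rcases tendsto_atTop_of_monotone hmono with h | ⟨l, hl⟩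
  · exact h.congr' hmax
  · refine absurd (integrableOn_Ioi_of_intervalIntegral_norm_tendsto l a (fun s => ?_) tendsto_id
      (hl.congr' ?_)) hnot
    · exact (hf.integrableOn_compact_subset Icc_subset_Ici_self isCompact_Icc).mono_set
        Ioc_subset_Icc_self
    · filter_upwards [eventually_ge_atTop a] with s hs
      rw [max_eq_right hs, id, intervalIntegral.integral_of_le hs,
        intervalIntegral.integral_of_le hs]
      exact setIntegral_congr_fun measurableSet_Ioc fun t ht =>
        (Real.norm_of_nonneg (hnonneg t ht.1)).symm

theorem primitive_two_mul_le {D : ℝ} (hf : LocallyIntegrableOn f (Ici 0))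
    (hnonneg : ∀ t ∈ Ioi (0 : ℝ), 0 ≤ f t) (hb : 0 ≤ b) (hD : 0 ≤ D)
    (hdouble : ∀ t, b ≤ t → f (2 * t) ≤ D * f t) (hs : 2 * b ≤ s) :
    ∫ t in (0 : ℝ)..2 * s, f t ≤ (1 + 2 * D) * ∫ t in (0 : ℝ)..s, f t := by
  have hmono := monotoneOn_primitive_of_nonneg hf hnonneg
  have hint : ∀ {x y : ℝ}, 0 ≤ x → 0 ≤ y → IntervalIntegrable f volume x y :=
    intervalIntegrable_of_locallyIntegrableOn_Ici hf
  have hs0 : 0 ≤ s := by linarith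
  have hhead : ∫ t in (0 : ℝ)..2 * b, f t ≤ ∫ t in (0 : ℝ)..s, f t :=
    hmono (mem_Ici.2 (by positivity)) hs0 hs
  have hscaled : IntervalIntegrable (fun t => f (2 * t)) volume b s := by
    have := (hint (x := 2 * b) (y := 2 * s) (by positivity) (by positivity)).comp_mul_left (c := 2)
    simpa using this
  have htail : ∫ t in 2 * b..2 * s, f t ≤ 2 * (D * ∫ t in (0 : ℝ)..s, f t) := by
    rw [← intervalIntegral.smul_integral_comp_mul_left, smul_eq_mul]
    gcongr
    calc ∫ t in b..s, f (2 * t)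
        ≤ ∫ t in b..s, D * f t :=
          intervalIntegral.integral_mono_on (by linarith) hscaled ((hint hb hs0).const_mul D)
            fun t ht => hdouble t ht.1
      _ = D * ((∫ t in (0 : ℝ)..s, f t) - ∫ t in (0 : ℝ)..b, f t) := by
          rw [intervalIntegral.integral_const_mul,
            intervalIntegral.integral_interval_sub_left (hint le_rfl hs0) (hint le_rfl hb)]
      _ ≤ D * ∫ t in (0 : ℝ)..s, f t := by
          gcongr
          linarith [primitive_nonneg hnonneg hb]
  rw [← intervalIntegral.integral_add_adjacent_intervals (b := 2 * b)
    (hint le_rfl (by positivity)) (hint (by positivity) (by positivity))]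
  linarith

end LocallyIntegrable

/-- The weight `1 / √(1 + ∫ t in a..s, f t)`. Multiplying a nonnegative, non-integrable `f` by it
keeps the integral over `(a, ∞)` divergent, as in the Abel–Dini theorem on divergent series. -/
noncomputable def abelDiniWeight (f : ℝ → ℝ) (a s : ℝ) : ℝ :=
  (√(1 + ∫ t in a..s, f t))⁻¹

namespace abelDiniWeight

variable {f : ℝ → ℝ} {a s t M : ℝ}

theorem pos (hnonneg : ∀ t ∈ Ioi a, 0 ≤ f t) (hs : a ≤ s) : 0 < abelDiniWeight f a s := by
  have := primitive_nonneg hnonneg hs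
  unfold abelDiniWeight
  positivity

theorem le_one (hnonneg : ∀ t ∈ Ioi a, 0 ≤ f t) (hs : a ≤ s) : abelDiniWeight f a s ≤ 1 :=
  inv_le_one_of_one_le₀ (Real.one_le_sqrt.2 (by linarith [primitive_nonneg hnonneg hs]))

theorem continuousOn (hf : LocallyIntegrableOn f (Ici a)) (hnonneg : ∀ t ∈ Ioi a, 0 ≤ f t) :
    ContinuousOn (abelDiniWeight f a) (Ici a) :=
  (continuousOn_const.add (continuousOn_primitive_Ici hf)).sqrt.inv₀ fun _ hs =>
    (inv_pos.1 (pos hnonneg hs)).ne'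

theorem antitoneOn (hf : LocallyIntegrableOn f (Ici a)) (hnonneg : ∀ t ∈ Ioi a, 0 ≤ f t) :
    AntitoneOn (abelDiniWeight f a) (Ici a) := fun _ hx _ hy hxy =>
  inv_anti₀ (inv_pos.1 (pos hnonneg hx)) <| Real.sqrt_le_sqrt <|
    add_le_add_right (monotoneOn_primitive_of_nonneg hf hnonneg hx hy hxy) 1

theorem tendsto_zero (hf : LocallyIntegrableOn f (Ici a)) (hnonneg : ∀ t ∈ Ioi a, 0 ≤ f t)
    (hdiv : ¬ IntegrableOn f (Ioi a)) : Tendsto (abelDiniWeight f a) atTop (𝓝 0) :=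
  (Real.tendsto_sqrt_atTop.comp <| tendsto_atTop_add_const_left _ _ <|
    (tendsto_primitive_atTop_iff hf hnonneg).2 hdiv).inv_tendsto_atTop

theorem sqrt_sub_one_le_integral_mul (hf : LocallyIntegrableOn f (Ici a))
    (hnonneg : ∀ t ∈ Ioi a, 0 ≤ f t) (hs : a ≤ s) :
    √(1 + ∫ t in a..s, f t) - 1 ≤ ∫ t in a..s, f t * abelDiniWeight f a t := by
  have hfw := hf.mul_continuousOn (continuousOn hf hnonneg) isClosed_Ici.isLocallyClosed
  have hΦ := primitive_nonneg hnonneg hs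
  calc √(1 + ∫ t in a..s, f t) - 1
      ≤ (∫ t in a..s, f t) * abelDiniWeight f a s := by
        rw [abelDiniWeight, ← div_eq_mul_inv, le_div_iff₀ (by positivity)]
        nlinarith [Real.sq_sqrt (by positivity : 0 ≤ 1 + ∫ t in a..s, f t),
          Real.one_le_sqrt.2 (by linarith : 1 ≤ 1 + ∫ t in a..s, f t)]
    _ = ∫ t in a..s, f t * abelDiniWeight f a s := (intervalIntegral.integral_mul_const _ _).symm
    _ ≤ ∫ t in a..s, f t * abelDiniWeight f a t := by
        refine intervalIntegral.integral_mono_on_of_le_Ioo hs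
          ((intervalIntegrable_of_locallyIntegrableOn_Ici hf le_rfl hs).mul_const _)
          (intervalIntegrable_of_locallyIntegrableOn_Ici hfw le_rfl hs) fun t ht => ?_
        exact mul_le_mul_of_nonneg_left (antitoneOn hf hnonneg ht.1.le hs ht.2.le)
          (hnonneg t ht.1)

theorem integrableOn_mul {p : ℝ → ℝ} (hf : LocallyIntegrableOn f (Ici a))
    (hnonneg : ∀ t ∈ Ioi a, 0 ≤ f t) (hp : IntegrableOn p (Ioi a)) :
    IntegrableOn (fun t => p t * abelDiniWeight f a t) (Ioi a) := by
  refine Integrable.mul_bdd (c := 1) hp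
    (((continuousOn hf hnonneg).mono Ioi_subset_Ici_self).aestronglyMeasurable
      measurableSet_Ioi) ?_
  filter_upwards [ae_restrict_mem measurableSet_Ioi] with t ht
  rw [Real.norm_of_nonneg (pos hnonneg (le_of_lt ht)).le]
  exact le_one hnonneg (le_of_lt ht)

theorem not_integrableOn_mul (hf : LocallyIntegrableOn f (Ici a))
    (hnonneg : ∀ t ∈ Ioi a, 0 ≤ f t) (hdiv : ¬ IntegrableOn f (Ioi a)) :
    ¬ IntegrableOn (fun t => f t * abelDiniWeight f a t) (Ioi a) := by
  rw [← tendsto_primitive_atTop_iff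
    (hf.mul_continuousOn (continuousOn hf hnonneg) isClosed_Ici.isLocallyClosed)
    fun t ht => mul_nonneg (hnonneg t ht) (pos hnonneg (le_of_lt ht)).le]
  have hsqrt : Tendsto (fun s => √(1 + ∫ t in a..s, f t) - 1) atTop atTop :=
    tendsto_atTop_add_const_right _ _ <| Real.tendsto_sqrt_atTop.comp <|
      tendsto_atTop_add_const_left _ _ <| (tendsto_primitive_atTop_iff hf hnonneg).2 hdiv
  refine tendsto_atTop_mono' _ ?_ hsqrt
  filter_upwards [eventually_ge_atTop a] with s hs
  exact sqrt_sub_one_le_integral_mul hf hnonneg hs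

theorem le_sqrt_mul (hnonneg : ∀ t ∈ Ioi a, 0 ≤ f t) (hs : a ≤ s) (ht : a ≤ t) (hM : 1 ≤ M)
    (hle : ∫ x in a..t, f x ≤ M * ∫ x in a..s, f x) :
    abelDiniWeight f a s ≤ √M * abelDiniWeight f a t := by
  have hΦs := primitive_nonneg hnonneg hs
  have hΦt := primitive_nonneg hnonneg ht
  have hsqrt : √(1 + ∫ x in a..t, f x) ≤ √M * √(1 + ∫ x in a..s, f x) := by
    rw [← Real.sqrt_mul (by linarith)]
    exact Real.sqrt_le_sqrt (by linarith)
  rw [abelDiniWeight, abelDiniWeight, ← div_eq_mul_inv, inv_eq_one_div,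
    div_le_div_iff₀ (by positivity) (by positivity), one_mul]
  exact hsqrt

theorem le_sqrt_mul_of_le_two_mul {b D : ℝ} (hf : LocallyIntegrableOn f (Ici 0))
    (hnonneg : ∀ t ∈ Ioi (0 : ℝ), 0 ≤ f t) (hb : 0 ≤ b) (hD : 0 ≤ D)
    (hdouble : ∀ t, b ≤ t → f (2 * t) ≤ D * f t) (hs : 2 * b ≤ s) (ht : 0 ≤ t)
    (hts : t ≤ 2 * s) :
    abelDiniWeight f 0 s ≤ √(1 + 2 * D) * abelDiniWeight f 0 t := by
  have hs0 : 0 ≤ s := by linarith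
  refine le_sqrt_mul hnonneg hs0 ht (by linarith) ?_
  calc ∫ x in (0 : ℝ)..t, f x
      ≤ ∫ x in (0 : ℝ)..2 * s, f x :=
        monotoneOn_primitive_of_nonneg hf hnonneg ht (ht.trans hts) hts
    _ ≤ (1 + 2 * D) * ∫ x in (0 : ℝ)..s, f x := primitive_two_mul_le hf hnonneg hb hD hdouble hs

end abelDiniWeight

section TailIntegral

variable {f : ℝ → ℝ} {a : ℝ}

theorem strictAntiOn_setIntegral_Ioi (hf : IntegrableOn f (Ioi a)) (hpos : ∀ t ∈ Ioi a, 0 < f t) :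
    StrictAntiOn (fun r => ∫ t in Ioi r, f t) (Ici a) := by
  intro x hx y _ hxy
  have hsub : Ioi x ⊆ Ioi a := Ioi_subset_Ioi hx
  have hxy_pos : 0 < ∫ t in x..y, f t := intervalIntegral.intervalIntegral_pos_of_pos_on
    ((intervalIntegrable_iff_integrableOn_Ioc_of_le hxy.le).2
      (hf.mono_set (Ioc_subset_Ioi_self.trans hsub))) (fun t ht => hpos t (hsub ht.1)) hxy
  have := intervalIntegral.integral_Ioi_sub_Ioi (hf.mono_set hsub) hxy.le
  dsimp only
  linarith

theorem continuousOn_setIntegral_Ioi (hf : IntegrableOn f (Ioi a)) :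
    ContinuousOn (fun r => ∫ t in Ioi r, f t) (Ici a) := by
  have hloc := (Iff.mpr integrableOn_Ici_iff_integrableOn_Ioi hf).locallyIntegrableOn
  refine ((continuousOn_const (c := ∫ t in Ioi a, f t)).sub
    (continuousOn_primitive_Ici hloc)).congr fun r hr => ?_
  dsimp only [Pi.sub_apply]
  rw [← intervalIntegral.integral_Ioi_sub_Ioi hf hr, sub_sub_cancel]

theorem setIntegral_Ioi_pos (hf : IntegrableOn f (Ioi a)) (hpos : ∀ t ∈ Ioi a, 0 < f t) :
    0 < ∫ t in Ioi a, f t := by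
  have hlt : a < a + 1 := lt_add_one a
  calc 0 ≤ ∫ t in Ioi (a + 1), f t := setIntegral_nonneg measurableSet_Ioi fun t ht =>
        (hpos t (hlt.trans ht)).le
    _ < ∫ t in Ioi a, f t := strictAntiOn_setIntegral_Ioi hf hpos self_mem_Ici hlt.le hlt

end TailIntegral

section MonotonePrimitive

variable {K : ℝ → ℝ} {a b l s : ℝ}

theorem hasDerivAt_primitive_of_continuousOn_Ici (hK : ContinuousOn K (Ici a)) (hs : a < s) :
    HasDerivAt (fun s => ∫ r in a..s, K r) (K s) s :=
  intervalIntegral.integral_hasDerivAt_right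
    ((hK.mono Icc_subset_Ici_self).intervalIntegrable_of_Icc hs.le)
    ((hK.mono Ioi_subset_Ici_self).stronglyMeasurableAtFilter isOpen_Ioi s hs)
    (hK.continuousAt (Ici_mem_nhds hs))

theorem strictConvexOn_primitive (hK : ContinuousOn K (Ici a)) (hmono : StrictMonoOn K (Ici a)) :
    StrictConvexOn ℝ (Ici a) fun s => ∫ r in a..s, K r := by
  refine StrictMonoOn.strictConvexOn_of_deriv (convex_Ici a)
    (continuousOn_primitive_Ici (hK.locallyIntegrableOn measurableSet_Ici)) ?_
  rw [interior_Ici]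
  exact (hmono.mono Ioi_subset_Ici_self).congr fun s hs =>
    (hasDerivAt_primitive_of_continuousOn_Ici hK hs).deriv.symm

theorem mul_sub_le_primitive_of_monotoneOn (hK : MonotoneOn K (Ici a)) (hKa : 0 ≤ K a)
    (hb : a ≤ b) (hs : a ≤ s) : K b * (s - b) ≤ ∫ r in a..s, K r := by
  have hint : ∀ {x y : ℝ}, a ≤ x → a ≤ y → IntervalIntegrable K volume x y := fun hx hy =>
    (hK.mono fun _ hr => (le_min hx hy).trans hr.1).intervalIntegrable
  have hnonneg : ∀ r ∈ Ici a, 0 ≤ K r := fun r hr => hKa.trans (hK self_mem_Ici hr hr)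
  rcases le_total s b with hsb | hbs
  · calc K b * (s - b) ≤ 0 := mul_nonpos_of_nonneg_of_nonpos (hnonneg b hb) (by linarith)
      _ ≤ ∫ r in a..s, K r := primitive_nonneg (fun r hr => hnonneg r (Ioi_subset_Ici_self hr)) hs
  · calc K b * (s - b) = ∫ _ in b..s, K b := by
          rw [intervalIntegral.integral_const, smul_eq_mul, mul_comm]
      _ ≤ ∫ r in b..s, K r := intervalIntegral.integral_mono_on hbs intervalIntegrable_const
          (hint hb hs) fun r hr => hK hb (hb.trans hr.1) hr.1
      _ = (∫ r in a..s, K r) - ∫ r in a..b, K r :=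
          (intervalIntegral.integral_interval_sub_left (hint le_rfl hs) (hint le_rfl hb)).symm
      _ ≤ ∫ r in a..s, K r :=
          sub_le_self _ (primitive_nonneg (fun r hr => hnonneg r (Ioi_subset_Ici_self hr)) hb)

theorem primitive_le_mul_sub_of_monotoneOn (hK : MonotoneOn K (Ici a))
    (hlim : Tendsto K atTop (𝓝 l)) (hs : a ≤ s) : ∫ r in a..s, K r ≤ l * (s - a) := by
  have hle : ∀ r ∈ Ici a, K r ≤ l := fun r hr => by
    refine ge_of_tendsto hlim ?_
    filter_upwards [eventually_ge_atTop r] with x hx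
    exact hK hr (le_trans (mem_Ici.1 hr) hx) hx
  calc ∫ r in a..s, K r ≤ ∫ _ in a..s, l :=
        intervalIntegral.integral_mono_on hs
          (hK.mono (by rw [uIcc_of_le hs]; exact Icc_subset_Ici_self)).intervalIntegrable
          intervalIntegrable_const fun r hr => hle r hr.1
    _ = l * (s - a) := by rw [intervalIntegral.integral_const, smul_eq_mul, mul_comm]

theorem exists_linear_bounds_primitive (hK : MonotoneOn K (Ici 0)) (hK0 : 0 ≤ K 0)
    (hlim : Tendsto K atTop (𝓝 l)) (hl : 0 < l) :
    ∃ c > (0 : ℝ), ∃ C > (0 : ℝ), ∀ s ∈ Ioi (0 : ℝ),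
      c * s - C ≤ ∫ r in (0 : ℝ)..s, K r ∧ ∫ r in (0 : ℝ)..s, K r ≤ C * (1 + s) := by
  obtain ⟨b, hKb, hb⟩ :=
    ((hlim.eventually (lt_mem_nhds hl)).and (eventually_ge_atTop 0)).exists
  refine ⟨K b, hKb, K b * b + l, by positivity, fun s hs => ⟨?_, ?_⟩⟩
  · linarith [mul_sub_le_primitive_of_monotoneOn hK hK0 hb (le_of_lt hs)]
  · have hs0 : 0 < s := hs
    have : 0 ≤ K b * b * (1 + s) := by positivity
    linarith [primitive_le_mul_sub_of_monotoneOn hK hlim hs0.le]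

end MonotonePrimitive

section BoundedOscillation

variable {p : ℝ → ℝ} {C s t : ℝ}

theorem two_mul_mul_le_of_div_le (hpos : ∀ s ∈ Ioi (0 : ℝ), 0 < p s)
    (hosc : ∀ s, 1 ≤ s → ∀ t ∈ Icc (s / 2) (2 * s), p s / p t ≤ C) (ht : 1 / 2 ≤ t) :
    2 * t * p (2 * t) ≤ 2 * C * (t * p t) := by
  have ht0 : 0 < t := by linarith
  have hle : p (2 * t) ≤ C * p t := (div_le_iff₀ (hpos t ht0)).1
    (hosc (2 * t) (by linarith) t ⟨by linarith, by linarith⟩)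
  linarith [mul_le_mul_of_nonneg_left hle ht0.le]

theorem abelDiniWeight.mul_div_mul_le (hloc : LocallyIntegrableOn (fun t => t * p t) (Ici 0))
    (hpos : ∀ s ∈ Ioi (0 : ℝ), 0 < p s)
    (hosc : ∀ s, 1 ≤ s → ∀ t ∈ Icc (s / 2) (2 * s), p s / p t ≤ C) (hs : 1 ≤ s)
    (ht : t ∈ Icc (s / 2) (2 * s)) :
    p s * abelDiniWeight (fun t => t * p t) 0 s / (p t * abelDiniWeight (fun t => t * p t) 0 t) ≤
      4 * C ^ 2 := by
  have hnonneg : ∀ t ∈ Ioi (0 : ℝ), 0 ≤ t * p t := fun t ht => (mul_pos ht (hpos t ht)).le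
  have hs0 : 0 < s := by linarith
  have ht0 : 0 < t := by linarith [ht.1]
  have hw := abelDiniWeight.pos hnonneg ht0.le
  have hC : 1 ≤ C := (div_self (hpos s hs0).ne').symm.trans_le
    (hosc s hs s ⟨by linarith, by linarith⟩)
  have hweight : abelDiniWeight (fun t => t * p t) 0 s / abelDiniWeight (fun t => t * p t) 0 t ≤
      √(1 + 2 * (2 * C)) :=
    (div_le_iff₀ hw).2 <| le_sqrt_mul_of_le_two_mul hloc hnonneg (b := 1 / 2)
      (by norm_num) (by linarith) (fun t ht => two_mul_mul_le_of_div_le hpos hosc ht)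
      (by linarith) ht0.le ht.2
  have hsqrt : √(1 + 2 * (2 * C)) ≤ 4 * C :=
    (Real.sqrt_le_left (by linarith)).2 (by nlinarith)
  rw [mul_div_mul_comm]
  calc p s / p t * (abelDiniWeight (fun t => t * p t) 0 s / abelDiniWeight (fun t => t * p t) 0 t)
      ≤ C * (4 * C) := mul_le_mul (hosc s hs t ht) (hweight.trans hsqrt)
        (div_nonneg (abelDiniWeight.pos hnonneg hs0.le).le hw.le) (by linarith)
    _ = 4 * C ^ 2 := by ring

theorem exists_antitoneOn_weight_integral_eq_one (hp : IntegrableOn p (Ioi 0))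
    (hpos : ∀ s ∈ Ioi (0 : ℝ), 0 < p s)
    (hosc : ∀ s, 1 ≤ s → ∀ t ∈ Icc (s / 2) (2 * s), p s / p t ≤ C)
    (hdiv : ¬ IntegrableOn (fun t => t * p t) (Ioi 0)) :
    ∃ g : ℝ → ℝ, ContinuousOn g (Ici 0) ∧ (∀ s ∈ Ici (0 : ℝ), 0 < g s) ∧ AntitoneOn g (Ici 0) ∧
      Tendsto g atTop (𝓝 0) ∧ IntegrableOn (fun t => p t * g t) (Ioi 0) ∧
      ∫ t in Ioi 0, p t * g t = 1 ∧ ¬ IntegrableOn (fun t => t * p t * g t) (Ioi 0) ∧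
      ∀ s, 1 ≤ s → ∀ t ∈ Icc (s / 2) (2 * s), p s * g s / (p t * g t) ≤ 4 * C ^ 2 := by
  have hnonneg : ∀ t ∈ Ioi (0 : ℝ), 0 ≤ t * p t := fun t ht => (mul_pos ht (hpos t ht)).le
  have hloc := locallyIntegrableOn_id_mul hp
  let w := abelDiniWeight (fun t => t * p t) 0
  have hw_pos : ∀ s ∈ Ici (0 : ℝ), 0 < w s := fun s hs => abelDiniWeight.pos hnonneg hs
  have hpw : IntegrableOn (fun t => p t * w t) (Ioi 0) :=
    abelDiniWeight.integrableOn_mul hloc hnonneg hp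
  let I := ∫ t in Ioi 0, p t * w t
  have hI : 0 < I := setIntegral_Ioi_pos hpw fun t ht =>
    mul_pos (hpos t ht) (hw_pos t (Ioi_subset_Ici_self ht))
  refine ⟨fun t => w t / I, (abelDiniWeight.continuousOn hloc hnonneg).div_const I,
    fun s hs => div_pos (hw_pos s hs) hI, fun x hx y hy hxy => div_le_div_of_nonneg_right
      (abelDiniWeight.antitoneOn hloc hnonneg hx hy hxy) hI.le, ?_, ?_, ?_, ?_, ?_⟩
  · simpa only [zero_div] using (abelDiniWeight.tendsto_zero hloc hnonneg hdiv).div_const I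
  · simp only [← mul_div_assoc]
    exact hpw.div_const I
  · simp only [← mul_div_assoc]
    rw [integral_div, div_self hI.ne']
  · simp only [← mul_div_assoc]
    refine fun h => abelDiniWeight.not_integrableOn_mul hloc hnonneg hdiv ?_
    simpa only [IntegrableOn, div_mul_cancel₀ _ hI.ne'] using h.mul_const I
  · intro s hs t ht
    simp only [← mul_div_assoc, div_div_div_cancel_right₀ hI.ne']
    exact abelDiniWeight.mul_div_mul_le hloc hpos hosc hs ht

end BoundedOscillation

theorem stmt_7_general (p : ℝ → ℝ) (C : ℝ) (hp : IntegrableOn p (Ioi 0))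
    (hpos : ∀ s ∈ Ioi (0 : ℝ), 0 < p s)
    (hosc : ∀ s, 1 ≤ s → ∀ t ∈ Icc (s / 2) (2 * s), p s / p t ≤ C)
    (hdiv : (∫⁻ t in Ioi (1 : ℝ), ENNReal.ofReal (t * p t)) = ⊤) :
    ∃ g : ℝ → ℝ,
      ContinuousOn g (Ici 0) ∧ (∀ s ∈ Ici (0 : ℝ), 0 < g s) ∧ AntitoneOn g (Ici 0) ∧
      Tendsto g atTop (𝓝 0) ∧
      (∫⁻ t in Ioi (0 : ℝ), ENNReal.ofReal (t * p t * g t)) = ⊤ ∧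
      (let Fg : ℝ → ℝ := fun s => ∫ r in (0 : ℝ)..s, (1 - ∫ t in Ioi r, p t * g t)
       StrictConvexOn ℝ (Ici 0) Fg ∧
       Fg 0 = 0 ∧
       (∀ s ∈ Ioi (0 : ℝ), HasDerivAt Fg (1 - ∫ t in Ioi s, p t * g t) s) ∧
       Tendsto (fun s => 1 - ∫ t in Ioi s, p t * g t) (𝓝[>] 0) (𝓝 0) ∧
       Tendsto (fun s => 1 - ∫ t in Ioi s, p t * g t) atTop (𝓝 1) ∧
       (∃ C₁' > (0 : ℝ), ∃ C₂' > (0 : ℝ),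
          ∀ s ∈ Ioi (0 : ℝ), C₁' * s - C₂' ≤ Fg s ∧ Fg s ≤ C₂' * (1 + s)) ∧
       (∀ s, 1 ≤ s → ∀ t ∈ Icc (s / 2) (2 * s),
          (p s * g s) / (p t * g t) ≤ 4 * C ^ 2) ∧
       (∫⁻ t in Ioi (1 : ℝ), ENNReal.ofReal (t * (p t * g t))) = ⊤) := by
  have hnonneg : ∀ t ∈ Ioi (0 : ℝ), 0 ≤ t * p t := fun t ht => (mul_pos ht (hpos t ht)).le
  have hloc := locallyIntegrableOn_id_mul hp
  obtain ⟨g, hg_cont, hg_pos, hg_anti, hg_zero, hpg, hmass, hpg_div, hpg_osc⟩ :=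
    exists_antitoneOn_weight_integral_eq_one hp hpos hosc
      ((lintegral_ofReal_Ioi_eq_top_iff hloc hnonneg zero_le_one).1 hdiv)
  have hlintegral : ∀ b, 0 ≤ b → ∫⁻ t in Ioi b, ENNReal.ofReal (t * p t * g t) = ⊤ := fun b hb =>
    (lintegral_ofReal_Ioi_eq_top_iff
      (hloc.mul_continuousOn hg_cont isClosed_Ici.isLocallyClosed)
      (fun t ht => mul_nonneg (hnonneg t ht) (hg_pos t (Ioi_subset_Ici_self ht)).le) hb).2 hpg_div
  let K : ℝ → ℝ := fun r => 1 - ∫ t in Ioi r, p t * g t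
  have hK_cont : ContinuousOn K (Ici 0) := continuousOn_const.sub (continuousOn_setIntegral_Ioi hpg)
  have hK_mono : StrictMonoOn K (Ici 0) := fun x hx y hy hxy => sub_lt_sub_left
    (strictAntiOn_setIntegral_Ioi hpg
      (fun t ht => mul_pos (hpos t ht) (hg_pos t (Ioi_subset_Ici_self ht))) hx hy hxy) 1
  have hK_zero : K 0 = 0 := sub_eq_zero.2 hmass.symm
  have hK_top : Tendsto K atTop (𝓝 1) := by
    simpa only [sub_zero, id] using Tendsto.const_sub (1 : ℝ)
      (tendsto_integral_Ioi_zero (f := fun t => p t * g t) (μ := volume) tendsto_id)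
  refine ⟨g, hg_cont, hg_pos, hg_anti, hg_zero, hlintegral 0 le_rfl,
    strictConvexOn_primitive hK_cont hK_mono, intervalIntegral.integral_same,
    fun s hs => hasDerivAt_primitive_of_continuousOn_Ici hK_cont hs, ?_, hK_top,
    exists_linear_bounds_primitive hK_mono.monotoneOn hK_zero.ge hK_top one_pos, hpg_osc, ?_⟩
  · simpa only [hK_zero] using ((hK_cont 0 self_mem_Ici).mono Ioi_subset_Ici_self).tendsto
  · simpa only [mul_assoc] using hlintegral 1 zero_le_one

/-- Under the standing assumptions, (A3) and (A2), there exists a continuous,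
strictly positive, decreasing `g : [0,∞) → (0,∞)` with `g(s) → 0` at infinity such that
`∫₀^∞ t F''(t) g(t) dt = ∞`, and the function
`F_g(s) := ∫₀^s (1 − ∫_r^∞ F''(t) g(t) dt) dr` is strictly convex, vanishes at `0`,
has `F_g'(s) = 1 − ∫_s^∞ F''(t) g(t) dt` with limits `0` at `0⁺` and `1` at `∞`, satisfies
linear growth bounds, satisfies the bounded oscillation condition with constant `4C₂²`,
and satisfies `∫₁^∞ t F_g''(t) dt = ∞`. -/
theorem stmt_7
    (F F' F'' : ℝ → ℝ) (C₁ C₂ : ℝ)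
    (hC₁ : 0 < C₁) (hC₂ : 0 < C₂)
    (hder1 : ∀ s ∈ Ioi (0:ℝ), HasDerivAt F (F' s) s)
    (hder2 : ∀ s ∈ Ioi (0:ℝ), HasDerivAt F' (F'' s) s)
    (hF''cont : ContinuousOn F'' (Ioi 0))
    (hF''pos : ∀ s ∈ Ioi (0:ℝ), 0 < F'' s)
    (hF'0 : Tendsto F' (nhdsWithin 0 (Ioi 0)) (nhds 0))
    (hgrowth : ∀ s ∈ Ioi (0:ℝ), C₁ * s - C₂ ≤ F s ∧ F s ≤ C₂ * (1 + s))
    (hosc : ∀ s, 1 ≤ s → ∀ t ∈ Icc (s/2) (2*s), F'' s / F'' t ≤ C₂)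
    (hF0 : Tendsto F (nhdsWithin 0 (Ioi 0)) (nhds 0))
    (hF'1 : Tendsto F' atTop (nhds 1))
    (hA2 : (∫⁻ t in Ioi (1:ℝ), ENNReal.ofReal (t * F'' t)) = ⊤) :
    ∃ g : ℝ → ℝ,
      ContinuousOn g (Ici 0) ∧ (∀ s ∈ Ici (0:ℝ), 0 < g s) ∧ AntitoneOn g (Ici 0) ∧
      Tendsto g atTop (nhds 0) ∧
      (∫⁻ t in Ioi (0:ℝ), ENNReal.ofReal (t * F'' t * g t)) = ⊤ ∧
      (let Fg : ℝ → ℝ := fun s => ∫ r in (0:ℝ)..s, (1 - ∫ t in Ioi r, F'' t * g t)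
       StrictConvexOn ℝ (Ici 0) Fg ∧
       Fg 0 = 0 ∧
       (∀ s ∈ Ioi (0:ℝ), HasDerivAt Fg (1 - ∫ t in Ioi s, F'' t * g t) s) ∧
       Tendsto (fun s => 1 - ∫ t in Ioi s, F'' t * g t) (nhdsWithin 0 (Ioi 0)) (nhds 0) ∧
       Tendsto (fun s => 1 - ∫ t in Ioi s, F'' t * g t) atTop (nhds 1) ∧
       (∃ C₁' > (0:ℝ), ∃ C₂' > (0:ℝ),
          ∀ s ∈ Ioi (0:ℝ), C₁' * s - C₂' ≤ Fg s ∧ Fg s ≤ C₂' * (1 + s)) ∧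
       (∀ s, 1 ≤ s → ∀ t ∈ Icc (s/2) (2*s),
          (F'' s * g s) / (F'' t * g t) ≤ 4 * C₂ ^ 2) ∧
       (∫⁻ t in Ioi (1:ℝ), ENNReal.ofReal (t * (F'' t * g t))) = ⊤) := by
  exact stmt_7_general F'' C₂ (integrableOn_Ioi_of_hasDerivAt_of_tendsto hder2
    (fun s hs => (hF''pos s hs).le) hF'0 hF'1) hF''pos hosc hA2
end

section
/- Let F satisfy the standing assumptions and the normalization (A3), and define the conjugate function F*(t) := sup_{s > 0} (s t − F(s)) for t ∈ [0,1). Then ∫₁^∞ t F''(t) dt = ∞ if and only if lim_{t→1⁻} F*(t) = ∞. -/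
open Set Filter Topology MeasureTheory

/-! For convex `F` the tangent line at `r` shows that `s ↦ s F'(r) - F(s)` is maximal at `s = r`, so
`F*(F'(r)) = G(r)` where `G(r) = r F'(r) - F(r)`. As `F'` increases to its limit `ℓ`, the divergence
of `F*` at `ℓ⁻` is therefore that of `G` at infinity, and since `G'(r) = r F''(r) ≥ 0` the latter
means that `∫ r F''(r) dr` diverges. -/

theorem tendsto_atTop_or_exists_tendsto_nhds_of_monotoneOn_Ici {α β : Type*} [LinearOrder α]
    [ConditionallyCompleteLinearOrder β] [TopologicalSpace β] [OrderTopology β] {f : α → β} {a : α}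
    (hf : MonotoneOn f (Ici a)) : Tendsto f atTop atTop ∨ ∃ b, Tendsto f atTop (𝓝 b) := by
  have hmono : Monotone fun x => f (max a x) := fun x y hxy =>
    hf (le_max_left a x) (le_max_left a y) (max_le_max_left a hxy)
  have heq : (fun x => f (max a x)) =ᶠ[atTop] f :=
    (eventually_ge_atTop a).mono fun x hx => congrArg f (max_eq_right hx)
  simpa only [tendsto_congr' heq] using tendsto_atTop_of_monotone hmono

section ImproperIntegral

variable {G g : ℝ → ℝ} {a : ℝ}

theorem integrableOn_Ioi_deriv_iff_lintegral_lt_top (hG : ∀ x ∈ Ioi a, HasDerivAt G (g x) x)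
    (hg : ∀ x ∈ Ioi a, 0 ≤ g x) :
    IntegrableOn g (Ioi a) ↔ ∫⁻ x in Ioi a, ENNReal.ofReal (g x) < ⊤ := by
  have hmeas : AEStronglyMeasurable g (volume.restrict (Ioi a)) :=
    (aestronglyMeasurable_deriv G _).congr
      (ae_restrict_of_forall_mem measurableSet_Ioi fun x hx => (hG x hx).deriv)
  rw [← hasFiniteIntegral_iff_ofReal (ae_restrict_of_forall_mem measurableSet_Ioi hg)]
  exact and_iff_right hmeas

theorem integrableOn_Ioi_deriv_iff_not_tendsto_atTop (hcont : ContinuousWithinAt G (Ici a) a)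
    (hG : ∀ x ∈ Ioi a, HasDerivAt G (g x) x) (hg : ∀ x ∈ Ioi a, 0 ≤ g x) :
    IntegrableOn g (Ioi a) ↔ ¬ Tendsto G atTop atTop := by
  constructor
  · intro hint
    exact not_tendsto_atTop_of_tendsto_nhds
      (tendsto_limUnder_of_hasDerivAt_of_integrableOn_Ioi hG hint)
  · intro hnot
    have hmono : MonotoneOn G (Ici a) := by
      refine monotoneOn_of_hasDerivWithinAt_nonneg (f' := g) (convex_Ici a) ?_ ?_ ?_
      · rintro x (hx : a ≤ x)
        rcases hx.eq_or_lt with rfl | hx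
        exacts [hcont, (hG x hx).continuousAt.continuousWithinAt]
      · simpa only [interior_Ici] using fun x hx => (hG x hx).hasDerivWithinAt
      · simpa only [interior_Ici] using hg
    obtain ⟨b, hb⟩ :=
      (tendsto_atTop_or_exists_tendsto_nhds_of_monotoneOn_Ici hmono).resolve_left hnot
    exact integrableOn_Ioi_deriv_of_nonneg hcont hG hg hb

theorem lintegral_Ioi_deriv_eq_top_iff_tendsto_atTop (hcont : ContinuousWithinAt G (Ici a) a)
    (hG : ∀ x ∈ Ioi a, HasDerivAt G (g x) x) (hg : ∀ x ∈ Ioi a, 0 ≤ g x) :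
    ∫⁻ x in Ioi a, ENNReal.ofReal (g x) = ⊤ ↔ Tendsto G atTop atTop := by
  rw [← not_iff_not, ← integrableOn_Ioi_deriv_iff_not_tendsto_atTop hcont hG hg,
    integrableOn_Ioi_deriv_iff_lintegral_lt_top hG hg, lt_top_iff_ne_top]

end ImproperIntegral

/-- The convex conjugate (Legendre–Fenchel transform) `t ↦ sup_{s ∈ S} (s t - F s)` of a function
`F` on `S`. It is real-valued, so it takes the junk value `0` where the supremum is infinite
and on the empty set. -/
noncomputable def conjugateOn (S : Set ℝ) (F : ℝ → ℝ) (t : ℝ) : ℝ :=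
  sSup ((fun s => s * t - F s) '' S)

section ConvexConjugate

variable {S : Set ℝ} {F F' : ℝ → ℝ} {m r s t ℓ : ℝ}

theorem isMaxOn_mul_sub_of_hasDerivAt (hF : ConvexOn ℝ S F) (hr : r ∈ S) (hm : HasDerivAt F m r) :
    IsMaxOn (fun s => s * m - F s) S r := by
  intro s hs
  change s * m - F s ≤ r * m - F r
  rcases lt_trichotomy r s with hrs | rfl | hsr
  · have hslope := hF.le_slope_of_hasDerivAt hr hs hrs hm
    rw [slope_def_field, le_div_iff₀ (sub_pos.2 hrs)] at hslope
    linarith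
  · exact le_rfl
  · have hslope := hF.slope_le_of_hasDerivAt hs hr hsr hm
    rw [slope_def_field, div_le_iff₀ (sub_pos.2 hsr)] at hslope
    linarith

theorem mul_sub_le_of_hasDerivAt_of_le (hF : ConvexOn ℝ S F) (hr : r ∈ S)
    (hm : HasDerivAt F m r) (htm : t ≤ m) (hs : s ∈ S) (hs₀ : 0 ≤ s) :
    s * t - F s ≤ r * m - F r :=
  calc s * t - F s ≤ s * m - F s := sub_le_sub_right (mul_le_mul_of_nonneg_left htm hs₀) _
    _ ≤ r * m - F r := isMaxOn_mul_sub_of_hasDerivAt hF hr hm hs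

theorem conjugateOn_le_of_hasDerivAt_of_le (hS : S ⊆ Ici 0) (hF : ConvexOn ℝ S F) (hr : r ∈ S)
    (hm : HasDerivAt F m r) (htm : t ≤ m) : conjugateOn S F t ≤ r * m - F r :=
  csSup_le (Set.Nonempty.image _ ⟨r, hr⟩) <| forall_mem_image.2 fun _ hs =>
    mul_sub_le_of_hasDerivAt_of_le hF hr hm htm hs (hS hs)

theorem mul_sub_le_conjugateOn_of_hasDerivAt_of_le (hS : S ⊆ Ici 0) (hF : ConvexOn ℝ S F)
    (hr : r ∈ S) (hm : HasDerivAt F m r) (htm : t ≤ m) (hs : s ∈ S) :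
    s * t - F s ≤ conjugateOn S F t :=
  le_csSup ⟨r * m - F r, forall_mem_image.2 fun _ hx =>
    mul_sub_le_of_hasDerivAt_of_le hF hr hm htm hx (hS hx)⟩ (mem_image_of_mem _ hs)

theorem deriv_le_of_convexOn_of_tendsto (hS : ∀ᶠ s in atTop, s ∈ S) (hF : ConvexOn ℝ S F)
    (hF' : ∀ s ∈ S, HasDerivAt F (F' s) s) (hlim : Tendsto F' atTop (𝓝 ℓ)) (hr : r ∈ S) :
    F' r ≤ ℓ := by
  have hmono : MonotoneOn F' S :=
    (hF.monotoneOn_deriv fun s hs => (hF' s hs).differentiableAt).congr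
      fun s hs => (hF' s hs).deriv
  refine ge_of_tendsto hlim ?_
  filter_upwards [hS, eventually_ge_atTop r] with s hs hrs
  exact hmono hr hs hrs

theorem tendsto_mul_deriv_sub_atTop_iff_tendsto_conjugateOn (hS₀ : S ⊆ Ici 0)
    (hS : ∀ᶠ s in atTop, s ∈ S) (hF : ConvexOn ℝ S F)
    (hF' : ∀ s ∈ S, HasDerivAt F (F' s) s) (hlim : Tendsto F' atTop (𝓝 ℓ)) :
    Tendsto (fun s => s * F' s - F s) atTop atTop ↔
      Tendsto (conjugateOn S F) (𝓝[<] ℓ) atTop := by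
  have hlarge {t : ℝ} (ht : t < ℓ) : ∀ᶠ r in atTop, r ∈ S ∧ t ≤ F' r :=
    hS.and ((hlim.eventually_const_lt ht).mono fun _ => le_of_lt)
  constructor
  · refine fun h => tendsto_atTop.2 fun M => ?_
    obtain ⟨s, hMs, hs⟩ := ((h.eventually_gt_atTop M).and hS).exists
    have hMℓ : M < s * ℓ - F s := hMs.trans_le <| sub_le_sub_right
      (mul_le_mul_of_nonneg_left (deriv_le_of_convexOn_of_tendsto hS hF hF' hlim hs) (hS₀ hs)) _
    have hcont : Tendsto (fun t => s * t - F s) (𝓝[<] ℓ) (𝓝 (s * ℓ - F s)) :=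
      ((continuous_const_mul s).sub continuous_const).continuousWithinAt
    filter_upwards [hcont.eventually_const_lt hMℓ, self_mem_nhdsWithin] with t hMt ht
    obtain ⟨r, hr, htr⟩ := (hlarge ht).exists
    exact hMt.le.trans
      (mul_sub_le_conjugateOn_of_hasDerivAt_of_le hS₀ hF hr (hF' r hr) htr hs)
  · refine fun h => tendsto_atTop.2 fun M => ?_
    obtain ⟨t, hMt, ht⟩ := ((h.eventually_ge_atTop M).and self_mem_nhdsWithin).exists
    filter_upwards [hlarge ht] with r ⟨hr, htr⟩
    exact hMt.trans (conjugateOn_le_of_hasDerivAt_of_le hS₀ hF hr (hF' r hr) htr)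

end ConvexConjugate

theorem hasDerivAt_mul_deriv_sub {F F' : ℝ → ℝ} {s F''s : ℝ} (hF : HasDerivAt F (F' s) s)
    (hF' : HasDerivAt F' F''s s) : HasDerivAt (fun x => x * F' x - F x) (s * F''s) s := by
  refine (((hasDerivAt_id s).mul hF').sub hF).congr_deriv ?_
  rw [id, one_mul, add_sub_cancel_left]

theorem stmt_11_general {F F' F'' : ℝ → ℝ} {a ℓ : ℝ} (ha : 0 < a)
    (hF : ∀ s ∈ Ioi (0 : ℝ), HasDerivAt F (F' s) s)
    (hF' : ∀ s ∈ Ioi (0 : ℝ), HasDerivAt F' (F'' s) s)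
    (hF'' : ∀ s ∈ Ioi (0 : ℝ), 0 ≤ F'' s) (hlim : Tendsto F' atTop (𝓝 ℓ)) :
    ∫⁻ t in Ioi a, ENNReal.ofReal (t * F'' t) = ⊤ ↔
      Tendsto (conjugateOn (Ioi 0) F) (𝓝[<] ℓ) atTop := by
  have hconvex : ConvexOn ℝ (Ioi 0) F := by
    refine convexOn_of_hasDerivWithinAt2_nonneg (f' := F') (f'' := F'') (convex_Ioi 0)
      (fun s hs => (hF s hs).continuousAt.continuousWithinAt) ?_ ?_ ?_ <;> rw [interior_Ioi]
    exacts [fun s hs => (hF s hs).hasDerivWithinAt, fun s hs => (hF' s hs).hasDerivWithinAt, hF'']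
  have hderiv (s : ℝ) (hs : 0 < s) : HasDerivAt (fun x => x * F' x - F x) (s * F'' s) s :=
    hasDerivAt_mul_deriv_sub (hF s hs) (hF' s hs)
  rw [lintegral_Ioi_deriv_eq_top_iff_tendsto_atTop (hderiv a ha).continuousAt.continuousWithinAt
    (fun s hs => hderiv s (ha.trans hs))
    (fun s hs => mul_nonneg (ha.trans hs).le (hF'' s (ha.trans hs)))]
  exact tendsto_mul_deriv_sub_atTop_iff_tendsto_conjugateOn Ioi_subset_Ici_self
    (eventually_gt_atTop 0) hconvex hF hlim

/-- Under the standing assumptions and (A3), with the conjugate function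
`F*(t) := sup_{s>0} (st − F(s))` for `t ∈ [0,1)`, one has `∫₁^∞ t F''(t) dt = ∞` if and
only if `F*(t) → ∞` as `t → 1⁻`. -/
theorem stmt_11
    (F F' F'' : ℝ → ℝ) (C₁ C₂ : ℝ)
    (hC₁ : 0 < C₁) (hC₂ : 0 < C₂)
    (hder1 : ∀ s ∈ Ioi (0:ℝ), HasDerivAt F (F' s) s)
    (hder2 : ∀ s ∈ Ioi (0:ℝ), HasDerivAt F' (F'' s) s)
    (hF''cont : ContinuousOn F'' (Ioi 0))
    (hF''pos : ∀ s ∈ Ioi (0:ℝ), 0 < F'' s)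
    (hF'0 : Tendsto F' (nhdsWithin 0 (Ioi 0)) (nhds 0))
    (hgrowth : ∀ s ∈ Ioi (0:ℝ), C₁ * s - C₂ ≤ F s ∧ F s ≤ C₂ * (1 + s))
    (hosc : ∀ s, 1 ≤ s → ∀ t ∈ Icc (s/2) (2*s), F'' s / F'' t ≤ C₂)
    (hF0 : Tendsto F (nhdsWithin 0 (Ioi 0)) (nhds 0))
    (hF'1 : Tendsto F' atTop (nhds 1))
    (Fstar : ℝ → ℝ)
    (hFstar : ∀ t ∈ Ico (0:ℝ) 1, Fstar t = sSup ((fun s => s * t - F s) '' Ioi 0)) :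
    (∫⁻ t in Ioi (1:ℝ), ENNReal.ofReal (t * F'' t)) = ⊤ ↔
      Tendsto Fstar (nhdsWithin 1 (Ico 0 1)) atTop := by
  rw [tendsto_congr' (eventually_nhdsWithin_of_forall hFstar), nhdsWithin_Ico_eq_nhdsLT one_pos]
  exact stmt_11_general one_pos hder1 hder2 (fun s hs => (hF''pos s hs).le) hF'1
end

section
/- Let d ≥ 2, let G : (0,∞) → ℝ be C² with G''(s) > 0 for all s > 0, lim_{s→0⁺} G'(s) = 0 and lim_{s→∞} G'(s) = 1 (so that (G')^{-1} maps [0,1) onto [0,∞)), and set a_G(s) := G'(s)/s. For r₀ > 0 and δ ∈ (0,1) define b(r) := (G')^{-1}((1−δ)^{d−1} r₀^{d−1}/r^{d−1}) for r ≥ r₀ and ω(x) := ∫_{r₀}^{|x|} b(r) dr for |x| ≥ r₀. Then ω = 0 on the sphere {|x| = r₀}, ∇ω(x) = b(|x|) x/|x| for |x| > r₀, the vector field a_G(|∇ω(x)|)∇ω(x) equals (1−δ)^{d−1} r₀^{d−1} x/|x|^d, and div(a_G(|∇ω|)∇ω)(x) = 0 for every x with |x| > r₀. -/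
open Set Filter Topology MeasureTheory

/-- Pointwise divergence of a vector field on `ℝ^d`: the sum of the partial derivatives of
its components. -/
noncomputable def diver {d : ℕ} (X : EuclideanSpace ℝ (Fin d) → EuclideanSpace ℝ (Fin d))
    (x : EuclideanSpace ℝ (Fin d)) : ℝ :=
  ∑ i, fderiv ℝ (fun y => X y i) x (EuclideanSpace.single i 1)

/-!
Since `ω` is a primitive of `b` in the radial variable, `∇ω(x) = b(|x|) x / |x|`, whose length is
`b(|x|)` because `b > 0`. Hence `a_G(|∇ω|) ∇ω = G'(b(|x|)) x / |x|`, and `b` is chosen so that this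
is the Newtonian field `c x / |x|^d`. A radial field `f(|x|) x` has divergence `r f'(r) + d f(r)` at
`r = |x|`, which vanishes exactly for multiples of `r ^ (-d)`.
-/

section Radial

variable {E : Type*} [NormedAddCommGroup E] [InnerProductSpace ℝ E] {x : E}

lemma hasFDerivAt_norm_of_ne_zero (hx : x ≠ 0) :
    HasFDerivAt (fun y : E => ‖y‖) (‖x‖⁻¹ • innerSL ℝ x) x := by
  have hsqrt := (hasStrictFDerivAt_norm_sq x).hasFDerivAt.sqrt (by positivity)
  simp only [Real.sqrt_sq (norm_nonneg _)] at hsqrt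
  refine hsqrt.congr_fderiv ?_
  rw [← Nat.cast_smul_eq_nsmul ℝ, smul_smul]
  congr 1
  field_simp
  norm_num

lemma hasFDerivAt_comp_norm {f : ℝ → ℝ} {f' : ℝ} (hx : x ≠ 0) (hf : HasDerivAt f f' ‖x‖) :
    HasFDerivAt (fun y : E => f ‖y‖) ((f' / ‖x‖) • innerSL ℝ x) x := by
  rw [div_eq_mul_inv, ← smul_smul]
  exact hf.comp_hasFDerivAt x (hasFDerivAt_norm_of_ne_zero hx)

lemma hasGradientAt_comp_norm [CompleteSpace E] {f : ℝ → ℝ} {f' : ℝ} (hx : x ≠ 0)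
    (hf : HasDerivAt f f' ‖x‖) :
    HasGradientAt (fun y : E => f ‖y‖) ((f' / ‖x‖) • x) x := by
  rw [hasGradientAt_iff_hasFDerivAt, map_smulₛₗ]
  exact hasFDerivAt_comp_norm hx hf

end Radial

lemma hasDerivAt_integral_of_continuousOn_Ici {F : Type*} [NormedAddCommGroup F] [NormedSpace ℝ F]
    [CompleteSpace F] {f : ℝ → F} {a t : ℝ} (hf : ContinuousOn f (Ici a)) (ht : a < t) :
    HasDerivAt (fun u => ∫ r in a..u, f r) (f t) t := by
  have hint : IntervalIntegrable f volume a t :=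
    (hf.mono (uIcc_of_le ht.le ▸ Icc_subset_Ici_self)).intervalIntegrable
  have hmeas : StronglyMeasurableAtFilter f (𝓝 t) :=
    (hf.mono Ioi_subset_Ici_self).stronglyMeasurableAtFilter isOpen_Ioi t ht
  exact intervalIntegral.integral_hasDerivAt_right hint hmeas (hf.continuousAt (Ici_mem_nhds ht))

lemma gradient_integral_norm {E : Type*} [NormedAddCommGroup E] [InnerProductSpace ℝ E]
    [CompleteSpace E] {b : ℝ → ℝ} {a : ℝ} {x : E} (hb : ContinuousOn b (Ici a)) (hx : x ≠ 0)
    (hax : a < ‖x‖) :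
    gradient (fun y : E => ∫ r in a..‖y‖, b r) x = (b ‖x‖ / ‖x‖) • x :=
  (hasGradientAt_comp_norm hx (hasDerivAt_integral_of_continuousOn_Ici hb hax)).gradient

lemma norm_div_norm_smul {E : Type*} [NormedAddCommGroup E] [NormedSpace ℝ E] {x : E} {β : ℝ}
    (hx : x ≠ 0) (hβ : 0 ≤ β) : ‖(β / ‖x‖) • x‖ = β := by
  rw [norm_smul, Real.norm_of_nonneg (by positivity), div_mul_cancel₀ _ (norm_ne_zero_iff.mpr hx)]

section Divergence

variable {d : ℕ} {x : EuclideanSpace ℝ (Fin d)}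

lemma diver_congr {X Y : EuclideanSpace ℝ (Fin d) → EuclideanSpace ℝ (Fin d)}
    (h : X =ᶠ[𝓝 x] Y) : diver X x = diver Y x := by
  refine Finset.sum_congr rfl fun i _ => ?_
  have hi : (fun y => X y i) =ᶠ[𝓝 x] fun y => Y y i := h.fun_comp (· i)
  rw [hi.fderiv_eq]

lemma diver_id : diver (fun y => y) x = d := by
  have hcoord (i : Fin d) : fderiv ℝ (fun y : EuclideanSpace ℝ (Fin d) => y i) x =
      EuclideanSpace.proj i :=
    (EuclideanSpace.proj i : EuclideanSpace ℝ (Fin d) →L[ℝ] ℝ).fderiv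
  simp [diver, hcoord]

lemma diver_smul {φ : EuclideanSpace ℝ (Fin d) → ℝ}
    {X : EuclideanSpace ℝ (Fin d) → EuclideanSpace ℝ (Fin d)}
    (hφ : DifferentiableAt ℝ φ x) (hX : DifferentiableAt ℝ X x) :
    diver (fun y => φ y • X y) x = fderiv ℝ φ x (X x) + φ x * diver X x := by
  have hXi (i : Fin d) : DifferentiableAt ℝ (fun y => X y i) x :=
    (EuclideanSpace.proj (𝕜 := ℝ) i).differentiableAt.comp x hX
  have hexpand : X x = ∑ i, X x i • EuclideanSpace.single i 1 := by
    simpa using ((EuclideanSpace.basisFun (Fin d) ℝ).sum_repr (X x)).symm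
  have hterm (i : Fin d) : fderiv ℝ (fun y => (φ y • X y) i) x (EuclideanSpace.single i 1) =
      X x i * fderiv ℝ φ x (EuclideanSpace.single i 1) +
        φ x * fderiv ℝ (fun y => X y i) x (EuclideanSpace.single i 1) := by
    simp only [PiLp.smul_apply, smul_eq_mul]
    rw [fderiv_fun_mul hφ (hXi i)]
    simp only [add_apply, smul_apply, smul_eq_mul, add_comm]
  conv_rhs => rw [hexpand]
  simp only [diver, hterm, Finset.sum_add_distrib, Finset.mul_sum, map_sum, map_smul, smul_eq_mul]

lemma diver_comp_norm_smul {f : ℝ → ℝ} {f' : ℝ} (hx : x ≠ 0) (hf : HasDerivAt f f' ‖x‖) :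
    diver (fun y => f ‖y‖ • y) x = ‖x‖ * f' + d * f ‖x‖ := by
  have hφ := hasFDerivAt_comp_norm hx hf
  rw [diver_smul hφ.differentiableAt differentiableAt_fun_id, diver_id, hφ.fderiv]
  simp only [smul_apply, innerSL_apply_apply, real_inner_self_eq_norm_sq,
    smul_eq_mul]
  field_simp

lemma diver_div_norm_pow_smul (c : ℝ) (hx : x ≠ 0) :
    diver (fun y => (c / ‖y‖ ^ d) • y) x = 0 := by
  have hnorm : ‖x‖ ≠ 0 := norm_ne_zero_iff.mpr hx
  have hpow : HasDerivAt (fun r : ℝ => c / r ^ d) (c * (-d * ‖x‖ ^ (-d - 1 : ℤ))) ‖x‖ := by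
    simpa [div_eq_mul_inv] using (hasDerivAt_zpow (-d) ‖x‖ (.inl hnorm)).const_mul c
  rw [diver_comp_norm_smul hx hpow, zpow_sub_one₀ hnorm, zpow_neg, zpow_natCast]
  field_simp
  ring

end Divergence

lemma div_pow_mem_Ioo {M c r₀ r : ℝ} {n : ℕ} (hr₀ : 0 < r₀) (hc : c ∈ Ioo 0 (M * r₀ ^ n))
    (hr : r₀ ≤ r) : c / r ^ n ∈ Ioo 0 M := by
  have hpow : 0 < r₀ ^ n := pow_pos hr₀ n
  have hpow_le : r₀ ^ n ≤ r ^ n := pow_le_pow_left₀ hr₀.le hr n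
  refine ⟨div_pos hc.1 (hpow.trans_le hpow_le), ?_⟩
  calc c / r ^ n ≤ c / r₀ ^ n := div_le_div_of_nonneg_left hc.1.le hpow hpow_le
    _ < M := (div_lt_iff₀ hpow).mpr hc.2

lemma continuousOn_comp_div_pow {h : ℝ → ℝ} {M c r₀ : ℝ} {n : ℕ} (hh : ContinuousOn h (Ioo 0 M))
    (hr₀ : 0 < r₀) (hc : c ∈ Ioo 0 (M * r₀ ^ n)) :
    ContinuousOn (fun r => h (c / r ^ n)) (Ici r₀) := by
  refine hh.comp (continuousOn_const.div (by fun_prop) fun r hr => ?_)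
    fun r hr => div_pow_mem_Ioo hr₀ hc hr
  exact pow_ne_zero n (hr₀.trans_le hr).ne'

lemma one_sub_pow_mul_mem_Ioo {δ t : ℝ} {n : ℕ} (hδ : δ ∈ Ioo 0 1) (hn : n ≠ 0) (ht : 0 < t) :
    (1 - δ) ^ n * t ∈ Ioo 0 t := by
  have hpos : 0 < 1 - δ := sub_pos.mpr hδ.2
  have hlt : (1 - δ) ^ n < 1 := pow_lt_one₀ hpos.le (sub_lt_self 1 hδ.1) hn
  exact ⟨mul_pos (pow_pos hpos n) ht, mul_lt_of_lt_one_left ht hlt⟩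

theorem stmt_12_general {d : ℕ} {g ginv : ℝ → ℝ} {M : ℝ}
    (hginv : ∀ y ∈ Ioo 0 M, g (ginv y) = y ∧ 0 < ginv y)
    (hginv_cont : ContinuousOn ginv (Ioo 0 M))
    {r₀ c : ℝ} (hr₀ : 0 < r₀) (hc : c ∈ Ioo 0 (M * r₀ ^ (d - 1)))
    {a b : ℝ → ℝ} {ω : EuclideanSpace ℝ (Fin d) → ℝ} (ha : ∀ s, a s = g s / s)
    (hb : ∀ r, b r = ginv (c / r ^ (d - 1))) (hω : ∀ x, ω x = ∫ r in r₀..‖x‖, b r) :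
    (∀ x, ‖x‖ = r₀ → ω x = 0) ∧
      ∀ x, r₀ < ‖x‖ →
        gradient ω x = (b ‖x‖ / ‖x‖) • x ∧
        a ‖gradient ω x‖ • gradient ω x = (c / ‖x‖ ^ d) • x ∧
        diver (fun y => a ‖gradient ω y‖ • gradient ω y) x = 0 := by
  have hne {x : EuclideanSpace ℝ (Fin d)} (hx : r₀ < ‖x‖) : x ≠ 0 :=
    norm_pos_iff.mp (hr₀.trans hx)
  have hgrad {x} (hx : r₀ < ‖x‖) : gradient ω x = (b ‖x‖ / ‖x‖) • x := by
    have hb_cont : ContinuousOn b (Ici r₀) :=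
      funext hb ▸ continuousOn_comp_div_pow hginv_cont hr₀ hc
    rw [funext hω]
    exact gradient_integral_norm hb_cont (hne hx) hx
  have hflux {x} (hx : r₀ < ‖x‖) :
      a ‖gradient ω x‖ • gradient ω x = (c / ‖x‖ ^ d) • x := by
    have hd : d ≠ 0 := by
      rintro rfl
      exact hne hx (Subsingleton.elim x 0)
    obtain ⟨hgb, hb_pos⟩ := hginv _ (div_pow_mem_Ioo hr₀ hc hx.le)
    rw [← hb] at hgb hb_pos
    rw [hgrad hx, norm_div_norm_smul (hne hx) hb_pos.le, ha, smul_smul,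
      div_mul_div_cancel₀ hb_pos.ne', hgb, div_div, pow_sub_one_mul hd]
  refine ⟨fun x hx => by rw [hω, hx, intervalIntegral.integral_same],
    fun x hx => ⟨hgrad hx, hflux hx, ?_⟩⟩
  have hflux_near : (fun y => a ‖gradient ω y‖ • gradient ω y) =ᶠ[𝓝 x]
      fun y => (c / ‖y‖ ^ d) • y :=
    (continuous_norm.continuousAt.eventually (lt_mem_nhds hx)).mono fun _ => hflux
  rw [diver_congr hflux_near, diver_div_norm_pow_smul c (hne hx)]

/-- For the radial prototype barrier `ω(x) = ∫_{r₀}^{|x|} b(r) dr` with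
`b(r) = (G')⁻¹((1−δ)^{d−1} r₀^{d−1} / r^{d−1})`: `ω` vanishes on the sphere `{|x| = r₀}`,
`∇ω(x) = b(|x|) x/|x|`, the vector field `a_G(|∇ω|)∇ω` equals
`(1−δ)^{d−1} r₀^{d−1} x/|x|^d`, and `div(a_G(|∇ω|)∇ω) = 0` for `|x| > r₀`. -/
theorem stmt_12
    (d : ℕ) (hd : 2 ≤ d)
    (G G' G'' : ℝ → ℝ)
    (hder1 : ∀ s ∈ Ioi (0:ℝ), HasDerivAt G (G' s) s)
    (hder2 : ∀ s ∈ Ioi (0:ℝ), HasDerivAt G' (G'' s) s)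
    (hG''cont : ContinuousOn G'' (Ioi 0))
    (hG''pos : ∀ s ∈ Ioi (0:ℝ), 0 < G'' s)
    (hG'0 : Tendsto G' (nhdsWithin 0 (Ioi 0)) (nhds 0))
    (hG'1 : Tendsto G' atTop (nhds 1))
    (Ginv : ℝ → ℝ) (hGinv0 : Ginv 0 = 0)
    (hGinv : ∀ s ∈ Ioi (0:ℝ), Ginv (G' s) = s)
    (hGinv' : ∀ y ∈ Ioo (0:ℝ) 1, G' (Ginv y) = y ∧ 0 < Ginv y)
    (hGinvmono : StrictMonoOn Ginv (Ico 0 1)) (hGinvcont : ContinuousOn Ginv (Ico 0 1))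
    (r₀ δ : ℝ) (hr₀ : 0 < r₀) (hδ : δ ∈ Ioo (0:ℝ) 1)
    (aG b : ℝ → ℝ) (ω : EuclideanSpace ℝ (Fin d) → ℝ)
    (haG : ∀ s, aG s = G' s / s)
    (hb : ∀ r, b r = Ginv ((1 - δ) ^ (d - 1) * r₀ ^ (d - 1) / r ^ (d - 1)))
    (hω : ∀ x : EuclideanSpace ℝ (Fin d), ω x = ∫ r in r₀..‖x‖, b r) :
    (∀ x : EuclideanSpace ℝ (Fin d), ‖x‖ = r₀ → ω x = 0) ∧
      ∀ x : EuclideanSpace ℝ (Fin d), r₀ < ‖x‖ →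
        gradient ω x = (b ‖x‖ / ‖x‖) • x ∧
        aG ‖gradient ω x‖ • gradient ω x
          = ((1 - δ) ^ (d - 1) * r₀ ^ (d - 1) / ‖x‖ ^ d) • x ∧
        diver (fun y => aG ‖gradient ω y‖ • gradient ω y) x = 0 := by
  have hc := one_sub_pow_mul_mem_Ioo hδ (by omega : d - 1 ≠ 0) (pow_pos hr₀ (d - 1))
  exact stmt_12_general hGinv' (hGinvcont.mono Ioo_subset_Ico_self) hr₀ (by rwa [one_mul]) haG hb hω
end

section
/- Let d ≥ 2 and let G : (0,∞) → ℝ be C² with G''(s) > 0 for all s > 0, lim_{s→0⁺} G'(s) = 0, lim_{s→∞} G'(s) = 1, and ∫₁^∞ t G''(t) dt = ∞. Then for every r₀ > 0, every η > 0 and every real number C there exists δ ∈ (0,1) such that ∫_{r₀}^{r₀+η} (G')^{-1}((1−δ)^{d−1} r₀^{d−1}/r^{d−1}) dr ≥ C; equivalently, the supremum over δ ∈ (0,1) of these integrals is infinite. -/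
open Set Filter Topology MeasureTheory

/-!
Substituting `y = G' t` turns `∫₀^∞ t G''(t) dt = ∞` into `∫₀¹ (G')⁻¹ = ∞`, and since `(G')⁻¹` is
increasing the divergence happens at `y = 1`. With `q = (1 - δ) ^ (d - 1)`, the argument
`q (r₀ / r) ^ (d - 1)` decreases from `q` with slope at most `(d - 1) / r₀`, so a second
substitution bounds the integral over `[r₀, r₀ + η]` from below by
`r₀ / (d - 1) * ∫ y in c..q, (G')⁻¹ y` for a fixed `c < 1`, and this tends to infinity as `δ → 0`.
-/

section ChangeOfVariables

variable {f f' : ℝ → ℝ} {s : Set ℝ}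

theorem setLIntegral_image_le_mul_setLIntegral_comp (hs : MeasurableSet s)
    (hf : ∀ x ∈ s, HasDerivWithinAt f (f' x) s x) (hinj : InjOn f s) {K : ℝ}
    (hK : ∀ x ∈ s, |f' x| ≤ K) (u : ℝ → ENNReal) :
    ∫⁻ y in f '' s, u y ≤ ENNReal.ofReal K * ∫⁻ x in s, u (f x) := by
  rw [lintegral_image_eq_lintegral_abs_deriv_mul hs hf hinj,
    ← lintegral_const_mul' _ _ ENNReal.ofReal_ne_top]
  exact setLIntegral_mono' hs fun x hx => by gcongr; exact hK x hx

theorem setLIntegral_mul_deriv_le_setLIntegral_leftInv (hs : MeasurableSet s)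
    (hs0 : ∀ x ∈ s, 0 ≤ x) (hf : ∀ x ∈ s, HasDerivWithinAt f (f' x) s x) {t : Set ℝ}
    (hmaps : MapsTo f s t) {g : ℝ → ℝ} (hg : LeftInvOn g f s) :
    ∫⁻ x in s, ENNReal.ofReal (x * f' x) ≤ ∫⁻ y in t, ENNReal.ofReal (g y) :=
  calc ∫⁻ x in s, ENNReal.ofReal (x * f' x)
      ≤ ∫⁻ x in s, ENNReal.ofReal |f' x| * ENNReal.ofReal (g (f x)) :=
        setLIntegral_mono' hs fun x hx => by
          rw [hg hx, ← ENNReal.ofReal_mul (abs_nonneg _), mul_comm x]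
          exact ENNReal.ofReal_le_ofReal (mul_le_mul_of_nonneg_right (le_abs_self _) (hs0 x hx))
    _ = ∫⁻ y in f '' s, ENNReal.ofReal (g y) :=
        (lintegral_image_eq_lintegral_abs_deriv_mul hs hf hg.injOn
          fun y => ENNReal.ofReal (g y)).symm
    _ ≤ ∫⁻ y in t, ENNReal.ofReal (g y) := lintegral_mono_set hmaps.image_subset

end ChangeOfVariables

section MonotoneOnIco

variable {μ : Measure ℝ} [IsLocallyFiniteMeasure μ] {g : ℝ → ℝ} {a b c : ℝ}

theorem setLIntegral_Ioo_eq_top_of_monotoneOn (hg : MonotoneOn g (Ico a b))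
    (htop : ∫⁻ y in Ico a b, ENNReal.ofReal (g y) ∂μ = ⊤) (hc : c ∈ Ico a b) :
    ∫⁻ y in Ioo c b, ENNReal.ofReal (g y) ∂μ = ⊤ := by
  have hleft : ∫⁻ y in Icc a c, ENNReal.ofReal (g y) ∂μ < ⊤ :=
    setLIntegral_lt_top_of_le_nnreal isCompact_Icc.measure_ne_top
      ⟨(g c).toNNReal, fun y hy =>
        ENNReal.ofReal_le_ofReal (hg ⟨hy.1, hy.2.trans_lt hc.2⟩ hc hy.2)⟩
  have hcover : Ico a b ⊆ Icc a c ∪ Ioo c b := fun y hy =>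
    (le_or_gt y c).imp (fun h => ⟨hy.1, h⟩) fun h => ⟨h, hy.2⟩
  have hsum : (⊤ : ENNReal) ≤
      ∫⁻ y in Icc a c, ENNReal.ofReal (g y) ∂μ + ∫⁻ y in Ioo c b, ENNReal.ofReal (g y) ∂μ :=
    htop.ge.trans ((lintegral_mono_set hcover).trans (lintegral_union_le _ _ _))
  exact (ENNReal.add_eq_top.1 (top_unique hsum)).resolve_left hleft.ne

theorem tendsto_setLIntegral_Ioo_nhds_top_of_monotoneOn (hg : MonotoneOn g (Ico a b))
    (htop : ∫⁻ y in Ico a b, ENNReal.ofReal (g y) ∂μ = ⊤) (hc : c ∈ Ico a b) :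
    Tendsto (fun q => ∫⁻ y in Ioo c q, ENNReal.ofReal (g y) ∂μ) (𝓝[<] b) (𝓝 ⊤) := by
  have hmeas : AEMeasurable (fun y => ENNReal.ofReal (g y)) (μ.restrict (Ioo c b)) :=
    (aemeasurable_restrict_of_monotoneOn measurableSet_Ioo
      (hg.mono fun y hy => ⟨hc.1.trans hy.1.le, hy.2⟩)).ennreal_ofReal
  have hcover : AECover (μ.restrict (Ioo c b)) (𝓝[<] b) fun q => Ioo c q :=
    aecover_Ioo_of_Ioo tendsto_const_nhds (tendsto_id.mono_left nhdsWithin_le_nhds)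
  have hlim := hcover.lintegral_tendsto_of_countably_generated hmeas
  rw [setLIntegral_Ioo_eq_top_of_monotoneOn hg htop hc] at hlim
  refine tendsto_nhds_top_mono' hlim fun q => ?_
  rw [Measure.restrict_restrict measurableSet_Ioo]
  exact lintegral_mono_set inter_subset_left

end MonotoneOnIco

section DecreasingProfile

variable {ψ ψ' : ℝ → ℝ} {a b K q : ℝ}

theorem setLIntegral_Ioo_le_mul_setLIntegral_comp_mul (hab : a ≤ b)
    (hψ : ∀ r ∈ Icc a b, HasDerivAt ψ (ψ' r) r) (hψ' : ∀ r ∈ Icc a b, |ψ' r| ≤ K)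
    (hanti : StrictAntiOn ψ (Icc a b)) (hψb : 0 ≤ ψ b) (hq0 : 0 < q) (hq1 : q ≤ 1)
    (u : ℝ → ENNReal) :
    ∫⁻ y in Ioo (ψ b) (q * ψ a), u y ≤ ENNReal.ofReal K * ∫⁻ r in Ioo a b, u (q * ψ r) := by
  have hderiv : ∀ r ∈ Icc a b, HasDerivAt (fun r => q * ψ r) (q * ψ' r) r := fun r hr =>
    (hψ r hr).const_mul q
  have hcover : Ioo (ψ b) (q * ψ a) ⊆ (fun r => q * ψ r) '' Ioo a b :=
    (Ioo_subset_Ioo_left (mul_le_of_le_one_left hψb hq1)).trans <|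
      intermediate_value_Ioo' hab fun r hr => (hderiv r hr).continuousAt.continuousWithinAt
  refine (lintegral_mono_set hcover).trans (setLIntegral_image_le_mul_setLIntegral_comp
    measurableSet_Ioo (fun r hr => (hderiv r (Ioo_subset_Icc_self hr)).hasDerivWithinAt)
    (fun r hr r' hr' h => ?_) (fun r hr => ?_) u)
  · exact hanti.injOn (Ioo_subset_Icc_self hr) (Ioo_subset_Icc_self hr')
      (mul_left_cancel₀ hq0.ne' h)
  · rw [abs_mul, abs_of_pos hq0]
    exact (mul_le_of_le_one_left (abs_nonneg _) hq1).trans (hψ' r (Ioo_subset_Icc_self hr))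

variable {g : ℝ → ℝ}

theorem ofReal_integral_comp_mul_eq_setLIntegral (hab : a ≤ b) (hg : MonotoneOn g (Ico 0 1))
    (hg0 : 0 ≤ g 0) (hanti : AntitoneOn ψ (Icc a b)) (hψa : ψ a = 1) (hψb : 0 ≤ ψ b)
    (hq0 : 0 ≤ q) (hq1 : q < 1) :
    ENNReal.ofReal (∫ r in a..b, g (q * ψ r)) =
      ∫⁻ r in Ioo a b, ENNReal.ofReal (g (q * ψ r)) := by
  have hmem : ∀ r ∈ Icc a b, q * ψ r ∈ Ico (0 : ℝ) 1 := fun r hr =>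
    ⟨mul_nonneg hq0 (hψb.trans (hanti hr (right_mem_Icc.2 hab) hr.2)),
      (mul_le_of_le_one_right hq0 (hψa ▸ hanti (left_mem_Icc.2 hab) hr hr.1)).trans_lt hq1⟩
  have hcomp : AntitoneOn (fun r => g (q * ψ r)) (Icc a b) := fun r hr r' hr' hrr' =>
    hg (hmem r' hr') (hmem r hr) (mul_le_mul_of_nonneg_left (hanti hr hr' hrr') hq0)
  have hint : IntegrableOn (fun r => g (q * ψ r)) (Ioo a b) :=
    (hcomp.integrableOn_isCompact isCompact_Icc).mono_set Ioo_subset_Icc_self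
  rw [intervalIntegral.integral_of_le hab, integral_Ioc_eq_integral_Ioo]
  refine ofReal_integral_eq_lintegral_ofReal hint ?_
  filter_upwards [ae_restrict_mem measurableSet_Ioo] with r hr
  have hqr := hmem r (Ioo_subset_Icc_self hr)
  exact hg0.trans (hg ⟨le_rfl, one_pos⟩ hqr hqr.1)

theorem tendsto_integral_comp_mul_atTop (hab : a < b) (hg : MonotoneOn g (Ico 0 1))
    (hg0 : 0 ≤ g 0) (htop : ∫⁻ y in Ico (0 : ℝ) 1, ENNReal.ofReal (g y) = ⊤)
    (hψ : ∀ r ∈ Icc a b, HasDerivAt ψ (ψ' r) r) (hK : 0 < K) (hψ' : ∀ r ∈ Icc a b, |ψ' r| ≤ K)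
    (hanti : StrictAntiOn ψ (Icc a b)) (hψa : ψ a = 1) (hψb : 0 ≤ ψ b) :
    Tendsto (fun q => ∫ r in a..b, g (q * ψ r)) (𝓝[<] 1) atTop := by
  have hψb1 : ψ b < 1 := hψa ▸ hanti (left_mem_Icc.2 hab.le) (right_mem_Icc.2 hab.le) hab
  rw [← tendsto_const_mul_atTop_of_pos hK, ← ENNReal.tendsto_ofReal_nhds_top]
  refine tendsto_nhds_top_mono
    (tendsto_setLIntegral_Ioo_nhds_top_of_monotoneOn hg htop ⟨hψb, hψb1⟩) ?_
  filter_upwards [Ioo_mem_nhdsLT one_pos] with q hq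
  rw [ENNReal.ofReal_mul hK.le,
    ofReal_integral_comp_mul_eq_setLIntegral hab.le hg hg0 hanti.antitoneOn hψa hψb hq.1.le
      hq.2]
  simpa only [hψa, mul_one] using
    setLIntegral_Ioo_le_mul_setLIntegral_comp_mul hab.le hψ hψ' hanti hψb hq.1 hq.2.le _

end DecreasingProfile

theorem tendsto_integral_comp_mul_rpow_neg_atTop {g : ℝ → ℝ} (hg : MonotoneOn g (Ico 0 1))
    (hg0 : 0 ≤ g 0) (htop : ∫⁻ y in Ico (0 : ℝ) 1, ENNReal.ofReal (g y) = ⊤) {p r₀ η : ℝ}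
    (hp : 0 < p) (hr₀ : 0 < r₀) (hη : 0 < η) :
    Tendsto (fun q => ∫ r in r₀..(r₀ + η), g (q * (r / r₀) ^ (-p))) (𝓝[<] 1) atTop := by
  have hpos : ∀ r ∈ Icc r₀ (r₀ + η), 0 < r / r₀ := fun r hr =>
    div_pos (hr₀.trans_le hr.1) hr₀
  refine tendsto_integral_comp_mul_atTop (lt_add_of_pos_right r₀ hη) hg hg0 htop
    (fun r hr => ((hasDerivAt_id r).div_const r₀).rpow_const (Or.inl (hpos r hr).ne'))
    (K := p / r₀) (div_pos hp hr₀) (fun r hr => ?_) (fun r hr _ _ hrr' => ?_) ?_ ?_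
  · have hle : (r / r₀) ^ (-p - 1) ≤ 1 :=
      Real.rpow_le_one_of_one_le_of_nonpos ((one_le_div hr₀).2 hr.1) (by linarith)
    have hnonneg : 0 ≤ (r / r₀) ^ (-p - 1) := Real.rpow_nonneg (hpos r hr).le _
    calc |1 / r₀ * -p * (r / r₀) ^ (-p - 1)|
        = p / r₀ * (r / r₀) ^ (-p - 1) := by
          rw [abs_mul, abs_of_nonneg hnonneg, mul_neg, abs_neg, abs_of_pos (by positivity),
            one_div_mul_eq_div]
      _ ≤ p / r₀ := mul_le_of_le_one_right (by positivity) hle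
  · exact Real.rpow_lt_rpow_of_neg (hpos r hr) (by gcongr) (neg_neg_of_pos hp)
  · rw [div_self hr₀.ne', Real.one_rpow]
  · positivity

theorem tendsto_one_sub_rpow_nhdsLT_one {p : ℝ} (hp : 0 < p) :
    Tendsto (fun δ : ℝ => (1 - δ) ^ p) (𝓝[>] 0) (𝓝[<] 1) := by
  refine tendsto_nhdsWithin_iff.2 ⟨?_, ?_⟩
  · have hcont : ContinuousAt (fun δ : ℝ => (1 - δ) ^ p) 0 :=
      (by fun_prop : ContinuousAt (fun δ : ℝ => 1 - δ) 0).rpow_const (Or.inr hp.le)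
    simpa using hcont.tendsto.mono_left nhdsWithin_le_nhds
  · filter_upwards [Ioo_mem_nhdsGT one_pos] with δ hδ
    exact Real.rpow_lt_one (by linarith [hδ.2]) (by linarith [hδ.1]) hp

theorem mapsTo_Ioo_of_hasDerivAt_pos_of_tendsto {f f' : ℝ → ℝ} {a l m : ℝ}
    (hf : ∀ x ∈ Ioi a, HasDerivAt f (f' x) x) (hpos : ∀ x ∈ Ioi a, 0 < f' x)
    (hl : Tendsto f (𝓝[>] a) (𝓝 l)) (hm : Tendsto f atTop (𝓝 m)) :
    MapsTo f (Ioi a) (Ioo l m) := by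
  have hmono : StrictMonoOn f (Ioi a) := strictMonoOn_of_hasDerivWithinAt_pos (convex_Ioi a)
    (fun x hx => (hf x hx).continuousAt.continuousWithinAt)
    (by simpa only [interior_Ioi] using fun x hx => (hf x hx).hasDerivWithinAt)
    (by simpa only [interior_Ioi] using hpos)
  intro x hx
  obtain ⟨w, haw, hwx⟩ := exists_between (mem_Ioi.1 hx)
  obtain ⟨z, hxz⟩ := exists_gt x
  have haz : z ∈ Ioi a := lt_trans hx hxz
  have hlw : l ≤ f w := le_of_tendsto hl <| by
    filter_upwards [Ioo_mem_nhdsGT haw] with v hv using (hmono hv.1 haw hv.2).le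
  have hzm : f z ≤ m := ge_of_tendsto hm <| by
    filter_upwards [eventually_ge_atTop z] with v hv
    exact hmono.monotoneOn haz (haz.trans_le hv) hv
  exact ⟨hlw.trans_lt (hmono haw hx hwx), (hmono hx haz hxz).trans_le hzm⟩

theorem stmt_15_general {p : ℝ} (hp : 0 < p) {G' G'' Ginv : ℝ → ℝ}
    (hder : ∀ s ∈ Ioi (0 : ℝ), HasDerivAt G' (G'' s) s) (hmaps : MapsTo G' (Ioi 0) (Ico 0 1))
    (htop : ∫⁻ t in Ioi (0 : ℝ), ENNReal.ofReal (t * G'' t) = ⊤)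
    (hinv : LeftInvOn Ginv G' (Ioi 0)) (hGinv0 : 0 ≤ Ginv 0)
    (hGinvmono : MonotoneOn Ginv (Ico 0 1)) {r₀ η : ℝ} (hr₀ : 0 < r₀) (hη : 0 < η) :
    Tendsto (fun δ : ℝ => ∫ r in r₀..(r₀ + η), Ginv ((1 - δ) ^ p * r₀ ^ p / r ^ p))
      (𝓝[>] 0) atTop := by
  have hGinvtop : ∫⁻ y in Ico (0 : ℝ) 1, ENNReal.ofReal (Ginv y) = ⊤ :=
    top_unique <| htop.ge.trans <| setLIntegral_mul_deriv_le_setLIntegral_leftInv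
      measurableSet_Ioi (fun _ hs => (mem_Ioi.1 hs).le)
      (fun s hs => (hder s hs).hasDerivWithinAt) hmaps hinv
  refine ((tendsto_integral_comp_mul_rpow_neg_atTop hGinvmono hGinv0 hGinvtop hp hr₀ hη).comp
    (tendsto_one_sub_rpow_nhdsLT_one hp)).congr fun δ =>
      intervalIntegral.integral_congr fun r hr => ?_
  rw [uIcc_of_le (by linarith)] at hr
  have hr0 : 0 ≤ r := hr₀.le.trans hr.1
  simp only [Real.rpow_neg (div_nonneg hr0 hr₀.le), Real.div_rpow hr0 hr₀.le, inv_div,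
    mul_div_assoc]

/-- If `G` is a normalized strictly convex linear-growth integrand with
`∫₁^∞ t G''(t) dt = ∞`, then for every `r₀ > 0`, `η > 0` and `C ∈ ℝ` there exists
`δ ∈ (0,1)` with `∫_{r₀}^{r₀+η} (G')⁻¹((1−δ)^{d−1} r₀^{d−1}/r^{d−1}) dr ≥ C`. -/
theorem stmt_15
    (d : ℕ) (hd : 2 ≤ d)
    (G G' G'' : ℝ → ℝ)
    (hder1 : ∀ s ∈ Ioi (0:ℝ), HasDerivAt G (G' s) s)
    (hder2 : ∀ s ∈ Ioi (0:ℝ), HasDerivAt G' (G'' s) s)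
    (hG''cont : ContinuousOn G'' (Ioi 0))
    (hG''pos : ∀ s ∈ Ioi (0:ℝ), 0 < G'' s)
    (hG'0 : Tendsto G' (nhdsWithin 0 (Ioi 0)) (nhds 0))
    (hG'1 : Tendsto G' atTop (nhds 1))
    (hA2 : (∫⁻ t in Ioi (1:ℝ), ENNReal.ofReal (t * G'' t)) = ⊤)
    (Ginv : ℝ → ℝ) (hGinv0 : Ginv 0 = 0)
    (hGinv : ∀ s ∈ Ioi (0:ℝ), Ginv (G' s) = s)
    (hGinv' : ∀ y ∈ Ioo (0:ℝ) 1, G' (Ginv y) = y ∧ 0 < Ginv y)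
    (hGinvmono : StrictMonoOn Ginv (Ico 0 1)) (hGinvcont : ContinuousOn Ginv (Ico 0 1)) :
    ∀ r₀ : ℝ, 0 < r₀ → ∀ η : ℝ, 0 < η → ∀ C : ℝ,
      ∃ δ : ℝ, 0 < δ ∧ δ < 1 ∧
        C ≤ ∫ r in r₀..(r₀ + η), Ginv ((1 - δ) ^ (d - 1) * r₀ ^ (d - 1) / r ^ (d - 1)) := by
  intro r₀ hr₀ η hη C
  have hlim := stmt_15_general (p := (d - 1 : ℕ)) (Nat.cast_pos.2 (by omega)) hder2
    ((mapsTo_Ioo_of_hasDerivAt_pos_of_tendsto hder2 hG''pos hG'0 hG'1).mono_right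
      Ioo_subset_Ico_self)
    (top_unique (hA2.ge.trans (lintegral_mono_set (Ioi_subset_Ioi zero_le_one))))
    hGinv hGinv0.ge hGinvmono.monotoneOn hr₀ hη
  simp only [Real.rpow_natCast] at hlim
  obtain ⟨δ, hC, hδ0, hδ1⟩ :=
    ((hlim.eventually_ge_atTop C).and (Ioo_mem_nhdsGT one_pos)).exists
  exact ⟨δ, hδ0, hδ1, hC⟩
end
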